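/- arXiv:1512.00427 — 2 statements merged into one kernel-verified Lean document; each statement's English description precedes it below -/
import Mathlib

section
/- Let p = 2m+1 > 10 be a prime and let T be a tree with m edges having at least 2m/5 leaves. Then T decomposes K_{4m+2} \ M, the complete graph on 4m+2 vertices minus any perfect matching M. -/
/-- `H` decomposes `G`: `G` is the edge-disjoint union of isomorphic copies of `H`,
each copy being given by an injective homomorphism of `H` into `G`, and every edge of `G`
lying in exactly one copy. -/
def Decomposes {α β : Type} (H : SimpleGraph α) (G : SimpleGraph β) : Prop :=
  ∃ (ι : Type) (f : ι → α → β),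
    (∀ i, Function.Injective (f i)) ∧
    (∀ i a b, H.Adj a b → G.Adj (f i a) (f i b)) ∧
    (∀ e ∈ G.edgeSet, ∃! q : ι × Sym2 α, q.2 ∈ H.edgeSet ∧ Sym2.map (f q.1) q.2 = e)

open Finset Polynomial in
/-- The divided difference of `X ^ (2 * s) * (X + a) ^ t` over `A` reads off a coefficient. -/
lemma sum_div_prod_eq_ite {K : Type*} [Field K] [DecidableEq K] (A : Finset K) (a : K) (s t : ℕ)
    (h : 2 * s + t < #A) :
    ∑ x ∈ A, ((x ^ 2) ^ s * (x + a) ^ t) / ∏ y ∈ A.erase x, (x - y) =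
      if 2 * s + t = #A - 1 then 1 else 0 := by
  have hmon : (X ^ (2 * s) * (X + C a) ^ t : K[X]).Monic :=
    (monic_X_pow _).mul ((monic_X_add_C a).pow t)
  have hdeg : (X ^ (2 * s) * (X + C a) ^ t : K[X]).natDegree = 2 * s + t := by
    rw [(monic_X_pow _).natDegree_mul ((monic_X_add_C a).pow t),
      (monic_X_add_C a).natDegree_pow]
    simp
  have key := Lagrange.coeff_eq_sum (s := A) (v := fun x => x) (Set.injOn_id _)
    (P := (X ^ (2 * s) * (X + C a) ^ t : K[X]))
    (lt_of_le_of_lt degree_le_natDegree (by rw [hdeg]; exact_mod_cast h))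
  simp only [eval_mul, eval_pow, eval_X, eval_add, eval_C, pow_mul] at key
  rw [← key]
  split_ifs with h'
  · rw [← h', ← pow_mul, ← hdeg]; exact hmon
  · rw [← pow_mul]; exact coeff_eq_zero_of_natDegree_lt (by omega)

open Finset in
lemma perm_eq_one_of_two_mul_add {n : ℕ} (σ τ : Equiv.Perm (Fin n))
    (h : ∀ i, 2 * (σ i : ℕ) + τ i = n - 1 + i) : σ = 1 ∧ τ = Fin.revPerm := by
  have hr : ∀ i, (2 * (σ i : ℤ)) = i + ((τ.trans Fin.revPerm) i : Fin n) := fun i => by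
    have := h i
    simp only [Equiv.trans_apply, Fin.revPerm_apply, Fin.val_rev]
    have := (τ i).2
    omega
  set ρ := τ.trans Fin.revPerm with hρ
  have hs : ∑ i : Fin n, ((i : ℤ) - (ρ i : Fin n)) ^ 2 = 0 := by
    have e1 : ∑ i, ((σ i : Fin n) : ℤ) ^ 2 = ∑ i : Fin n, (i : ℤ) ^ 2 :=
      Equiv.sum_comp σ (fun i : Fin n => (i : ℤ) ^ 2)
    have e2 : ∑ i, ((ρ i : Fin n) : ℤ) ^ 2 = ∑ i : Fin n, (i : ℤ) ^ 2 :=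
      Equiv.sum_comp ρ (fun i : Fin n => (i : ℤ) ^ 2)
    have : ∀ i : Fin n, ((i : ℤ) - (ρ i : Fin n)) ^ 2 =
        2 * (i : ℤ) ^ 2 + 2 * ((ρ i : Fin n) : ℤ) ^ 2 - 4 * ((σ i : Fin n) : ℤ) ^ 2 := fun i => by
      linear_combination (2 * (σ i : ℤ) + i + (ρ i : Fin n)) * hr i
    rw [sum_congr rfl fun i _ => this i, sum_sub_distrib, sum_add_distrib, ← mul_sum, ← mul_sum,
      ← mul_sum, e1, e2]
    ring
  rw [sum_eq_zero_iff_of_nonneg fun i _ => sq_nonneg _] at hs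
  have hρi : ∀ i, ρ i = i := fun i => by
    have := pow_eq_zero_iff (two_ne_zero) |>.1 (hs i (mem_univ i))
    apply Fin.ext; omega
  constructor
  · ext i
    have := hr i
    rw [hρi i] at this
    simp only [Equiv.Perm.coe_one, id_eq]
    omega
  · ext i
    have h1 := hρi i
    rw [hρ, Equiv.trans_apply] at h1
    have : Fin.rev (Fin.rev (τ i)) = Fin.rev i := by rw [← Fin.revPerm_apply (τ i), h1]
    rw [Fin.rev_rev] at this
    rw [this, Fin.revPerm_apply]

open Finset in
lemma prod_divided_difference {K : Type*} [Field K] [DecidableEq K] {n : ℕ} (a : Fin n → K)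
    (A : Fin n → Finset K) (hA : ∀ i, #(A i) = n + i) (σ τ : Equiv.Perm (Fin n)) :
    ∏ i, (∑ x ∈ A i, ((x ^ 2) ^ (σ i : ℕ) * (x + a i) ^ (τ i : ℕ)) /
      ∏ y ∈ (A i).erase x, (x - y)) = if σ = 1 ∧ τ = Fin.revPerm then 1 else 0 := by
  by_cases hall : ∀ i, 2 * (σ i : ℕ) + τ i = n - 1 + i
  · rw [if_pos (perm_eq_one_of_two_mul_add σ τ hall)]
    refine prod_eq_one fun i _ => ?_
    have := hall i
    have := i.2
    rw [sum_div_prod_eq_ite _ _ _ _ (by rw [hA]; omega), if_pos (by rw [hA]; omega)]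
  · rw [if_neg]
    · have hsum : ∑ i, (2 * (σ i : ℕ) + τ i) = ∑ i : Fin n, (n - 1 + (i : ℕ)) := by
        have hrev : ∑ i : Fin n, (n - 1) = ∑ i : Fin n, (i : ℕ) + ∑ i : Fin n, (i : ℕ) := by
          nth_rewrite 3 [← Equiv.sum_comp Fin.revPerm]
          rw [← sum_add_distrib]
          refine sum_congr rfl fun i _ => ?_
          rw [Fin.revPerm_apply, Fin.val_rev]
          have := i.2
          omega
        rw [sum_add_distrib, ← mul_sum, Equiv.sum_comp σ (fun i : Fin n => (i : ℕ)),
          Equiv.sum_comp τ (fun i : Fin n => (i : ℕ)), sum_add_distrib, hrev]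
        ring
      obtain ⟨j, hj⟩ : ∃ j, 2 * (σ j : ℕ) + τ j < n - 1 + j := by
        by_contra! hc
        apply hall
        intro i
        exact ((sum_eq_sum_iff_of_le fun i _ => hc i).1 hsum.symm i (mem_univ i)).symm
      refine prod_eq_zero (mem_univ j) ?_
      rw [sum_div_prod_eq_ite _ _ _ _ (by rw [hA]; omega), if_neg (by rw [hA]; omega)]
    · rintro ⟨rfl, rfl⟩
      apply hall
      intro i
      have := i.2
      simp only [Equiv.Perm.coe_one, id_eq, Fin.revPerm_apply, Fin.val_rev]
      omega

open Finset in
lemma exists_injective_sq_injective_add_of_card_eq {K : Type*} [Field K] {n : ℕ} (a : Fin n → K)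
    (A : Fin n → Finset K) (hcard : ∀ i, #(A i) = n + i) :
    ∃ x : Fin n → K, (∀ i, x i ∈ A i) ∧ Function.Injective (fun i => x i ^ 2) ∧
      Function.Injective (fun i => x i + a i) := by
  classical
  by_contra! hcon
  have hdet : ∀ v : Fin n → K, (Matrix.vandermonde v).det =
      ∑ σ : Equiv.Perm (Fin n), ((Equiv.Perm.sign σ : ℤ) : K) * ∏ i, v i ^ (σ i : ℕ) := fun v => by
    rw [← Matrix.det_transpose, Matrix.det_apply']
    rfl
  have hzero : ∑ x ∈ Fintype.piFinset A, (∏ i, (∏ y ∈ (A i).erase (x i), (x i - y))⁻¹) *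
      ((Matrix.vandermonde fun i => x i ^ 2).det * (Matrix.vandermonde fun i => x i + a i).det)
      = 0 := by
    refine sum_eq_zero fun x hx => ?_
    rw [Fintype.mem_piFinset] at hx
    by_cases h1 : Function.Injective (fun i => x i ^ 2)
    · have h2 : (Matrix.vandermonde fun i => x i + a i).det = 0 := by
        by_contra h
        exact hcon x hx h1 (Matrix.det_vandermonde_ne_zero_iff.1 h)
      rw [h2]; simp
    · have h2 : (Matrix.vandermonde fun i => x i ^ 2).det = 0 := by
        by_contra h
        exact h1 (Matrix.det_vandermonde_ne_zero_iff.1 h)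
      rw [h2]; simp
  have hexp : ∑ x ∈ Fintype.piFinset A, (∏ i, (∏ y ∈ (A i).erase (x i), (x i - y))⁻¹) *
      ((Matrix.vandermonde fun i => x i ^ 2).det * (Matrix.vandermonde fun i => x i + a i).det)
      = ∑ σ : Equiv.Perm (Fin n), ∑ τ : Equiv.Perm (Fin n),
        ((Equiv.Perm.sign σ : ℤ) : K) * ((Equiv.Perm.sign τ : ℤ) : K) *
        ∏ i, (∑ x ∈ A i, ((x ^ 2) ^ (σ i : ℕ) * (x + a i) ^ (τ i : ℕ)) /
          ∏ y ∈ (A i).erase x, (x - y)) := by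
    simp_rw [hdet, sum_mul_sum, mul_sum]
    rw [sum_comm]
    refine sum_congr rfl fun σ _ => ?_
    rw [sum_comm]
    refine sum_congr rfl fun τ _ => ?_
    rw [prod_univ_sum, mul_sum]
    refine sum_congr rfl fun x _ => ?_
    simp_rw [div_eq_mul_inv, prod_mul_distrib]
    ring
  rw [hzero] at hexp
  simp_rw [prod_divided_difference a A hcard] at hexp
  rw [sum_eq_single_of_mem 1 (mem_univ _), sum_eq_single_of_mem Fin.revPerm (mem_univ _)] at hexp
  · simp only [and_self, if_true, mul_one, Equiv.Perm.sign_one] at hexp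
    rcases Int.units_eq_one_or (Equiv.Perm.sign (Fin.revPerm (n := n))) with h | h <;>
      simp [h] at hexp
  · intro τ _ hτ; simp [hτ]
  · intro σ _ hσ; simp [hσ]

open Finset in
/-- From lists of size at least `2 n - 1` one can choose elements whose squares are distinct and
whose translates by prescribed amounts are distinct. -/
lemma exists_injective_sq_injective_add {K : Type*} [Field K] {n : ℕ} (a : Fin n → K)
    (A : Fin n → Finset K) (hA : ∀ i, 2 * n - 1 ≤ #(A i)) :
    ∃ x : Fin n → K, (∀ i, x i ∈ A i) ∧ Function.Injective (fun i => x i ^ 2) ∧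
      Function.Injective (fun i => x i + a i) := by
  have hex : ∀ i, ∃ B ⊆ A i, #B = n + i := fun i =>
    exists_subset_card_eq (le_trans (by have := i.2; omega) (hA i))
  choose B hB hBc using hex
  obtain ⟨x, hx, h⟩ := exists_injective_sq_injective_add_of_card_eq a B hBc
  exact ⟨x, fun i => hB i (hx i), h⟩

/-- A rooted tree on `V`, given by a parent function that decreases a depth function. -/
structure RTree (V : Type*) where
  root : V
  par : V → V
  dep : V → ℕ
  dep_par : ∀ v, v ≠ root → dep (par v) < dep v

/-- The graph on `K × Bool` joining pairs with distinct first coordinates, that is the complete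
multipartite graph whose parts are indexed by `K` and have size two. -/
def cocktail (K : Type*) : SimpleGraph (K × Bool) where
  Adj a b := a.1 ≠ b.1
  symm := ⟨fun _ _ h => h.symm⟩
  loopless := ⟨fun _ h => h rfl⟩

/-- Two labelings of a rooted tree whose edges jointly realise every (difference up to sign, type)
pair exactly once develop cyclically into a decomposition. -/
lemma decomposes_cocktail {K V : Type} [Field K] (h2 : (2 : K) ≠ 0) (τ : RTree V)
    (T : SimpleGraph V)
    (hT : ∀ e, e ∈ T.edgeSet ↔ ∃ v, v ≠ τ.root ∧ e = s(v, τ.par v))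
    (f : Bool → V → K) (lev : Bool → V → Bool)
    (hinj : ∀ i, Function.Injective fun v => (f i v, lev i v))
    (hne : ∀ i v, v ≠ τ.root → f i v ≠ f i (τ.par v))
    (huniq : ∀ (x : K) (t : Bool), x ≠ 0 → ∃! q : Bool × V, q.2 ≠ τ.root ∧
      (f q.1 q.2 - f q.1 (τ.par q.2)) ^ 2 = x ^ 2 ∧
      xor (lev q.1 q.2) (lev q.1 (τ.par q.2)) = t) :
    Decomposes T (cocktail K) := by
  refine ⟨Bool × K × Bool, fun q v => (f q.1 v + q.2.1, xor (lev q.1 v) q.2.2), ?_, ?_, ?_⟩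
  · rintro ⟨i, t, ε⟩ u v h
    simp only [Prod.mk.injEq, add_left_inj, Bool.bne_left_inj] at h
    apply hinj i
    ext
    · exact h.1
    · simpa using h.2
  · rintro ⟨i, t, ε⟩ a b hab
    have := (hT s(a, b)).1 hab
    obtain ⟨v, hv, he⟩ := this
    have h1 := hne i v hv
    simp only [cocktail, ne_eq, add_left_inj]
    rcases Sym2.eq_iff.1 he with ⟨rfl, rfl⟩ | ⟨rfl, rfl⟩
    · exact h1
    · exact h1.symm
  · have main : ∀ (a b : K × Bool) (i : Bool) (v : V), v ≠ τ.root →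
        f i v - f i (τ.par v) = a.1 - b.1 → xor (lev i v) (lev i (τ.par v)) = xor a.2 b.2 →
        a.1 ≠ b.1 →
        ∃! q : (Bool × K × Bool) × Sym2 V, q.2 ∈ T.edgeSet ∧
          Sym2.map (fun v => (f q.1.1 v + q.1.2.1, xor (lev q.1.1 v) q.1.2.2)) q.2 = s(a, b) := by
      rintro ⟨x, l⟩ ⟨y, l'⟩ i v hv hd hl hxy
      dsimp only at hd hl hxy
      refine ⟨((i, x - f i v, xor l (lev i v)), s(v, τ.par v)), ⟨(hT _).2 ⟨v, hv, rfl⟩, ?_⟩, ?_⟩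
      · simp only [Sym2.map_mk]
        refine Sym2.eq_iff.2 (Or.inl ⟨?_, ?_⟩)
        · ext
          · simp
          · simp only; cases lev i v <;> cases l <;> rfl
        · ext
          · simp only; linear_combination -hd
          · simp only
            revert hl
            cases lev i v <;> cases lev i (τ.par v) <;> cases l <;> cases l' <;> simp
      · rintro ⟨⟨i', t', ε'⟩, e'⟩ ⟨he', hmap⟩
        obtain ⟨v', hv', rfl⟩ := (hT e').1 he'
        simp only [Sym2.map_mk] at hmap
        have hsame : (i', v') = (i, v) := by
          refine (huniq (x - y) (xor l l') (sub_ne_zero.2 hxy)).unique ⟨hv', ?_, ?_⟩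
            ⟨hv, ?_, ?_⟩
          · rcases Sym2.eq_iff.1 hmap with ⟨h1, h2⟩ | ⟨h1, h2⟩ <;>
              simp only [Prod.mk.injEq] at h1 h2
            · rw [← h1.1, ← h2.1]; ring
            · rw [← h1.1, ← h2.1]; ring
          · rcases Sym2.eq_iff.1 hmap with ⟨h1, h2⟩ | ⟨h1, h2⟩ <;>
              simp only [Prod.mk.injEq] at h1 h2
            · rw [← h1.2, ← h2.2]
              cases lev i' v' <;> cases lev i' (τ.par v') <;> cases ε' <;> rfl
            · rw [← h1.2, ← h2.2]
              cases lev i' v' <;> cases lev i' (τ.par v') <;> cases ε' <;> rfl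
          · simp only; rw [hd]
          · exact hl
        obtain ⟨rfl, rfl⟩ := Prod.mk.inj hsame
        rcases Sym2.eq_iff.1 hmap with ⟨h1, h2⟩ | ⟨h1, h2'⟩
        · simp only [Prod.mk.injEq] at h1
          rw [← h1.1, ← h1.2]
          simp only [add_sub_cancel_left, Prod.mk.injEq, true_and, and_true]
          cases lev i' v' <;> cases ε' <;> rfl
        · exfalso
          simp only [Prod.mk.injEq] at h1 h2'
          have : (2 : K) * (x - y) = 0 := by
            linear_combination (-1 : K) * hd + h1.1 - h2'.1
          rcases mul_eq_zero.1 this with h | h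
          · exact h2 h
          · exact hxy (sub_eq_zero.1 h)
    intro e
    induction e with | _ a b =>
    intro hab
    have hab' : a.1 ≠ b.1 := hab
    obtain ⟨⟨i, v⟩, ⟨hv, hk, hl⟩, -⟩ := huniq (a.1 - b.1) (xor a.2 b.2) (sub_ne_zero.2 hab')
    rcases sq_eq_sq_iff_eq_or_eq_neg.1 hk with h | h
    · exact main a b i v hv h hl hab'
    · rw [Sym2.eq_swap]
      refine main b a i v hv (by rw [h]; ring) ?_ hab'.symm
      rw [hl, Bool.xor_comm]

lemma Decomposes.congr {α β γ : Type} {H : SimpleGraph α} {G : SimpleGraph β} {G' : SimpleGraph γ}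
    (h : Decomposes H G) (φ : β ≃ γ) (hφ : ∀ a b, G'.Adj (φ a) (φ b) ↔ G.Adj a b) :
    Decomposes H G' := by
  obtain ⟨ι, f, hinj, hhom, hedge⟩ := h
  refine ⟨ι, fun i v => φ (f i v), fun i => φ.injective.comp (hinj i),
    fun i a b hab => (hφ _ _).2 (hhom i a b hab), fun e he => ?_⟩
  induction e with | _ a b =>
  obtain ⟨a, rfl⟩ := φ.surjective a
  obtain ⟨b, rfl⟩ := φ.surjective b
  have hiff : ∀ q : ι × Sym2 α, Sym2.map (fun v => φ (f q.1 v)) q.2 = s(φ a, φ b) ↔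
      Sym2.map (f q.1) q.2 = s(a, b) := fun q => by
    rw [← Sym2.map_mk, ← (Sym2.map.injective φ.injective).eq_iff, Sym2.map_map]
    rfl
  simp_rw [hiff]
  exact hedge s(a, b) ((hφ a b).1 he)

/-- A perfect matching of the complete graph on `2 n` vertices pairs them up as `Fin n × Bool`. -/
lemma exists_equiv_of_isPerfectMatching {m n : ℕ} (hmn : m = 2 * n)
    (M : (⊤ : SimpleGraph (Fin m)).Subgraph) (hM : M.IsPerfectMatching) :
    ∃ φ : Fin n × Bool ≃ Fin m, ∀ a b, M.Adj (φ a) (φ b) ↔ a ≠ b ∧ a.1 = b.1 := by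
  classical
  have hex : ∀ v, ∃! w, M.Adj v w := fun v => hM.1 (hM.2 v)
  choose μ hμ hμu using hex
  have hne : ∀ v, μ v ≠ v := fun v h => (M.adj_sub (hμ v)).ne h.symm
  have hinv : ∀ v, μ (μ v) = v := fun v => (hμu (μ v) v (hμ v).symm).symm
  have hiff : ∀ v w, M.Adj v w ↔ w = μ v := fun v w => ⟨hμu v w, fun h => h ▸ hμ v⟩
  let low : Finset (Fin m) := Finset.univ.filter fun v => v < μ v
  have hcard : low.card = n := by
    have himg : low.image μ = Finset.univ.filter fun v => ¬ v < μ v := by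
      ext v
      simp only [low, Finset.mem_image, Finset.mem_filter, Finset.mem_univ, true_and, not_lt]
      constructor
      · rintro ⟨w, hw, rfl⟩; rw [hinv]; exact hw.le
      · intro h; exact ⟨μ v, by rw [hinv]; exact lt_of_le_of_ne h (hne v), hinv v⟩
    have h1 := Finset.card_filter_add_card_filter_not (s := (Finset.univ : Finset (Fin m)))
      (fun v => v < μ v)
    rw [← himg, Finset.card_image_of_injective _ (Function.LeftInverse.injective hinv),
      Finset.card_univ, Fintype.card_fin] at h1
    change low.card + low.card = m at h1
    omega
  let idx := low.equivFinOfCardEq hcard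
  let φ : Fin n × Bool → Fin m := fun q =>
    if q.2 then μ (idx.symm q.1) else idx.symm q.1
  have hlow : ∀ j, ((idx.symm j : low) : Fin m) < μ (idx.symm j) := fun j =>
    (Finset.mem_filter.1 (idx.symm j).2).2
  have hφ : Function.Injective φ := by
    rintro ⟨i, s⟩ ⟨j, t⟩ h
    have hi := hlow i
    have hj := hlow j
    have key : ((idx.symm i : low) : Fin m) = idx.symm j → i = j := fun h =>
      idx.symm.injective (Subtype.ext h)
    cases s <;> cases t <;> simp only [φ, if_true, Bool.false_eq_true, if_false] at h
    · rw [key h]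
    · rw [h, hinv] at hi; exact absurd (hi.trans hj) (lt_irrefl _)
    · rw [← h, hinv] at hj; exact absurd (hi.trans hj) (lt_irrefl _)
    · rw [key (Function.LeftInverse.injective hinv h)]
  have hbij : Function.Bijective φ :=
    (Fintype.bijective_iff_injective_and_card φ).2 ⟨hφ, by simp; omega⟩
  refine ⟨Equiv.ofBijective φ hbij, ?_⟩
  have hμφ : ∀ i s, μ (φ (i, s)) = φ (i, !s) := fun i s => by
    cases s <;> simp [φ, hinv]
  rintro ⟨i, s⟩ ⟨j, t⟩
  rw [hiff, Equiv.ofBijective_apply, Equiv.ofBijective_apply, hμφ, hφ.eq_iff]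
  cases s <;> cases t <;> simp [eq_comm]

/-- Every finite tree can be rooted at any of its vertices. -/
lemma exists_rTree {V : Type} [Fintype V] (T : SimpleGraph V) (hT : T.IsTree) (r : V) :
    ∃ τ : RTree V, τ.root = r ∧
      ∀ e, e ∈ T.edgeSet ↔ ∃ v, v ≠ τ.root ∧ e = s(v, τ.par v) := by
  classical
  have hex : ∀ v, ∃ w, v ≠ r → T.Adj v w ∧ T.dist r w < T.dist r v := fun v => by
    by_cases hv : v = r
    · exact ⟨v, fun h => absurd hv h⟩
    · obtain ⟨w, hd⟩ := (hT.connected v r).exists_walk_length_eq_dist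
      cases w with
      | nil => exact absurd rfl hv
      | cons h q =>
        refine ⟨_, fun _ => ⟨h, ?_⟩⟩
        rw [SimpleGraph.dist_comm, SimpleGraph.dist_comm (u := r)]
        have := SimpleGraph.dist_le q
        simp only [SimpleGraph.Walk.length_cons] at hd
        omega
  choose par hpar using hex
  refine ⟨⟨r, par, T.dist r, fun v hv => (hpar v hv).2⟩, rfl, ?_⟩
  let F : {v // v ≠ r} → T.edgeFinset := fun v => ⟨s(v.1, par v.1), by
    rw [SimpleGraph.mem_edgeFinset]; exact (hpar v.1 v.2).1⟩
  have hF : Function.Injective F := by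
    rintro ⟨u, hu⟩ ⟨v, hv⟩ h
    rcases Sym2.eq_iff.1 (Subtype.ext_iff.1 h) with h' | ⟨h1, h2⟩
    · exact Subtype.ext h'.1
    · have a := (hpar u hu).2
      have b := (hpar v hv).2
      simp only at h1 h2
      rw [h2] at a; rw [← h1] at b
      omega
  have hbij : Function.Bijective F := by
    refine (Fintype.bijective_iff_injective_and_card F).2 ⟨hF, ?_⟩
    have := hT.card_edgeFinset
    rw [Fintype.card_coe, Fintype.card_subtype_compl, Fintype.card_subtype_eq]
    omega
  intro e
  constructor
  · intro he
    obtain ⟨⟨v, hv⟩, h⟩ := hbij.2 ⟨e, SimpleGraph.mem_edgeFinset.2 he⟩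
    exact ⟨v, hv, (Subtype.ext_iff.1 h).symm⟩
  · rintro ⟨v, hv, rfl⟩
    exact (hpar v hv).1

section Labelings

open Finset

set_option linter.unusedSectionVars false

/-- A partial labeling of a rooted tree: an injective placement of a parent-closed set of vertices
in `K × Bool` such that distinct edges have distinct (squared difference, type) pairs. -/
structure PartialLabeling {V : Type} (τ : RTree V) (K : Type) [Field K] where
  S : Finset V
  f : V → K
  lev : V → Bool
  root_mem : τ.root ∈ S
  par_mem : ∀ v ∈ S, v ≠ τ.root → τ.par v ∈ S
  inj : ∀ u ∈ S, ∀ v ∈ S, f u = f v → lev u = lev v → u = v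
  ne_par : ∀ v ∈ S, v ≠ τ.root → f v ≠ f (τ.par v)
  rainbow : ∀ u ∈ S, ∀ v ∈ S, u ≠ τ.root → v ≠ τ.root →
    (f u - f (τ.par u)) ^ 2 = (f v - f (τ.par v)) ^ 2 →
    xor (lev u) (lev (τ.par u)) = xor (lev v) (lev (τ.par v)) → u = v

namespace PartialLabeling

variable {K V : Type} [Field K] {τ : RTree V}

/-- The type of the edge from `v` to its parent: `false` for pure, `true` for mixed edges. -/
def typ (st : PartialLabeling τ K) (v : V) : Bool := xor (st.lev v) (st.lev (τ.par v))

/-- The squared difference along the edge from `v` to its parent. -/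
def key (st : PartialLabeling τ K) (v : V) : K := (st.f v - st.f (τ.par v)) ^ 2

variable [DecidableEq K] [DecidableEq V]

/-- The placed non-root vertices on level `l` joined to their parents by an edge of type `b`. -/
def edges (st : PartialLabeling τ K) (b l : Bool) : Finset V :=
  st.S.filter fun v => v ≠ τ.root ∧ st.typ v = b ∧ st.lev v = l

/-- The squared differences along edges of type `b`. -/
def keys (st : PartialLabeling τ K) (b : Bool) : Finset K :=
  (st.S.filter fun v => v ≠ τ.root ∧ st.typ v = b).image st.key

/-- The occupied positions on level `l`. -/
def occ (st : PartialLabeling τ K) (l : Bool) : Finset K :=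
  (st.S.filter fun v => st.lev v = l).image st.f

/-- `st'` extends `st` by the vertex set `W`, all of whose parents are already placed. -/
structure Ext (st st' : PartialLabeling τ K) (W : Finset V) : Prop where
  S_eq : st'.S = st.S ∪ W
  disj : ∀ w ∈ W, w ∉ st.S
  par_mem : ∀ w ∈ W, τ.par w ∈ st.S
  f_eq : ∀ v ∈ st.S, st'.f v = st.f v
  lev_eq : ∀ v ∈ st.S, st'.lev v = st.lev v

lemma card_occ (st : PartialLabeling τ K) (l : Bool) :
    #(st.occ l) = #(st.S.filter fun v => st.lev v = l) := by
  refine card_image_of_injOn fun u hu v hv h => ?_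
  simp only [coe_filter, Set.mem_ofPred_eq] at hu hv
  exact st.inj u hu.1 v hv.1 h (hu.2.trans hv.2.symm)

lemma mem_occ {st : PartialLabeling τ K} {l : Bool} {z : K} :
    z ∈ st.occ l ↔ ∃ v ∈ st.S, st.lev v = l ∧ st.f v = z := by
  simp only [occ, mem_image, mem_filter, and_assoc]

lemma mem_keys {st : PartialLabeling τ K} {b : Bool} {κ : K} :
    κ ∈ st.keys b ↔ ∃ v ∈ st.S, v ≠ τ.root ∧ st.typ v = b ∧ st.key v = κ := by
  simp only [keys, mem_image, mem_filter, and_assoc]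

lemma card_keys (st : PartialLabeling τ K) (b : Bool) :
    #(st.keys b) = #(st.edges b false) + #(st.edges b true) := by
  rw [keys, card_image_of_injOn, ← card_union_of_disjoint]
  · congr 1
    ext v
    simp only [edges, mem_filter, mem_union]
    cases st.lev v <;> simp
  · rw [disjoint_left]
    intro v h1 h2
    simp only [edges, mem_filter] at h1 h2
    simp_all
  · intro u hu v hv h
    simp only [coe_filter, Set.mem_ofPred_eq] at hu hv
    exact st.rainbow u hu.1 v hv.1 hu.2.1 hv.2.1 h (hu.2.2.trans hv.2.2.symm)

lemma card_filter_lev (st : PartialLabeling τ K) (l : Bool) :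
    #(st.S.filter fun v => st.lev v = l) =
      (if st.lev τ.root = l then 1 else 0) + #(st.edges false l) + #(st.edges true l) := by
  have h0 : #(({τ.root} : Finset V).filter fun v => st.lev v = l) =
      if st.lev τ.root = l then 1 else 0 := by
    rw [filter_singleton]; split_ifs <;> simp
  rw [← h0, ← card_union_of_disjoint, ← card_union_of_disjoint]
  · congr 1
    ext v
    simp only [edges, mem_filter, mem_union, mem_singleton]
    have := st.root_mem
    by_cases hv : v = τ.root
    · subst hv; simp [this]
    · cases st.typ v <;> simp [hv]
  · rw [disjoint_left]
    intro v h1 h2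
    simp only [edges, mem_filter, mem_union, mem_singleton] at h1 h2
    rcases h1 with h1 | h1 <;> simp_all
  · rw [disjoint_left]
    intro v h1 h2
    simp only [edges, mem_filter, mem_singleton] at h1 h2
    simp_all

lemma card_S (st : PartialLabeling τ K) :
    #st.S = 1 + #(st.edges false false) + #(st.edges true false) + #(st.edges false true) +
      #(st.edges true true) := by
  have h := card_filter_add_card_filter_not (s := st.S) (fun v => st.lev v = false)
  simp only [Bool.not_eq_false] at h
  rw [st.card_filter_lev, st.card_filter_lev] at h
  rw [← h]
  cases st.lev τ.root <;> simp <;> ring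

/-- Simultaneous extension by several vertices whose parents are already placed. -/
lemma exists_ext (st : PartialLabeling τ K) (W : Finset V) (z : V → K) (l : V → Bool)
    (hW : ∀ w ∈ W, w ∉ st.S) (hp : ∀ w ∈ W, τ.par w ∈ st.S)
    (hz : ∀ w ∈ W, z w ∉ st.occ (l w)) (hne : ∀ w ∈ W, z w ≠ st.f (τ.par w))
    (hk : ∀ w ∈ W, (z w - st.f (τ.par w)) ^ 2 ∉ st.keys (xor (l w) (st.lev (τ.par w))))
    (hinj : ∀ u ∈ W, ∀ v ∈ W, z u = z v → l u = l v → u = v)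
    (hrb : ∀ u ∈ W, ∀ v ∈ W, (z u - st.f (τ.par u)) ^ 2 = (z v - st.f (τ.par v)) ^ 2 →
      xor (l u) (st.lev (τ.par u)) = xor (l v) (st.lev (τ.par v)) → u = v) :
    ∃ st' : PartialLabeling τ K, st.Ext st' W ∧ ∀ w ∈ W, st'.f w = z w ∧ st'.lev w = l w := by
  let F : V → K := fun v => if v ∈ W then z v else st.f v
  let Λ : V → Bool := fun v => if v ∈ W then l v else st.lev v
  have hFS : ∀ v ∈ st.S, F v = st.f v := fun v hv => if_neg fun h => hW v h hv
  have hΛS : ∀ v ∈ st.S, Λ v = st.lev v := fun v hv => if_neg fun h => hW v h hv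
  have hFW : ∀ v ∈ W, F v = z v := fun v hv => if_pos hv
  have hΛW : ∀ v ∈ W, Λ v = l v := fun v hv => if_pos hv
  refine ⟨⟨st.S ∪ W, F, Λ, mem_union_left _ st.root_mem, ?_, ?_, ?_, ?_⟩,
    ⟨rfl, hW, hp, hFS, hΛS⟩, fun w hw => ⟨hFW w hw, hΛW w hw⟩⟩
  · intro v hv hr
    rcases mem_union.1 hv with hv | hv
    · exact mem_union_left _ (st.par_mem v hv hr)
    · exact mem_union_left _ (hp v hv)
  · intro u hu v hv
    rcases mem_union.1 hu with hu | hu <;> rcases mem_union.1 hv with hv | hv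
    · rw [hFS u hu, hFS v hv, hΛS u hu, hΛS v hv]; exact st.inj u hu v hv
    · rw [hFS u hu, hFW v hv, hΛS u hu, hΛW v hv]
      intro h1 h2
      exact absurd (mem_occ.2 ⟨u, hu, h2, h1⟩) (hz v hv)
    · rw [hFW u hu, hFS v hv, hΛW u hu, hΛS v hv]
      intro h1 h2
      exact absurd (mem_occ.2 ⟨v, hv, h2.symm, h1.symm⟩) (hz u hu)
    · rw [hFW u hu, hFW v hv, hΛW u hu, hΛW v hv]; exact hinj u hu v hv
  · intro v hv hr
    rcases mem_union.1 hv with hv | hv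
    · rw [hFS v hv, hFS _ (st.par_mem v hv hr)]; exact st.ne_par v hv hr
    · rw [hFW v hv, hFS _ (hp v hv)]; exact hne v hv
  · intro u hu v hv hur hvr
    rcases mem_union.1 hu with hu | hu <;> rcases mem_union.1 hv with hv | hv
    · rw [hFS u hu, hFS v hv, hΛS u hu, hΛS v hv, hFS _ (st.par_mem u hu hur),
        hFS _ (st.par_mem v hv hvr), hΛS _ (st.par_mem u hu hur), hΛS _ (st.par_mem v hv hvr)]
      exact st.rainbow u hu v hv hur hvr
    · rw [hFS u hu, hFW v hv, hΛS u hu, hΛW v hv, hFS _ (st.par_mem u hu hur),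
        hFS _ (hp v hv), hΛS _ (st.par_mem u hu hur), hΛS _ (hp v hv)]
      intro h1 h2
      exact absurd (mem_keys.2 ⟨u, hu, hur, h2, h1⟩) (hk v hv)
    · rw [hFW u hu, hFS v hv, hΛW u hu, hΛS v hv, hFS _ (hp u hu),
        hFS _ (st.par_mem v hv hvr), hΛS _ (hp u hu), hΛS _ (st.par_mem v hv hvr)]
      intro h1 h2
      exact absurd (mem_keys.2 ⟨v, hv, hvr, h2.symm, h1.symm⟩) (hk u hu)
    · rw [hFW u hu, hFW v hv, hΛW u hu, hΛW v hv, hFS _ (hp u hu), hFS _ (hp v hv),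
        hΛS _ (hp u hu), hΛS _ (hp v hv)]
      exact hrb u hu v hv

namespace Ext

variable {st st' : PartialLabeling τ K} {W : Finset V}

lemma ne_root (h : st.Ext st' W) {w : V} (hw : w ∈ W) : w ≠ τ.root :=
  fun e => h.disj w hw (e ▸ st.root_mem)

lemma typ_eq (h : st.Ext st' W) {v : V} (hv : v ∈ st.S) (hr : v ≠ τ.root) :
    st'.typ v = st.typ v := by
  rw [typ, typ, h.lev_eq v hv, h.lev_eq _ (st.par_mem v hv hr)]

lemma key_eq (h : st.Ext st' W) {v : V} (hv : v ∈ st.S) (hr : v ≠ τ.root) :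
    st'.key v = st.key v := by
  rw [key, key, h.f_eq v hv, h.f_eq _ (st.par_mem v hv hr)]

lemma mem_S (h : st.Ext st' W) {v : V} : v ∈ st'.S ↔ v ∈ st.S ∨ v ∈ W := by
  rw [h.S_eq, mem_union]

lemma subset (h : st.Ext st' W) : st.S ⊆ st'.S := fun _ hv => h.mem_S.2 (Or.inl hv)

lemma card_edges (h : st.Ext st' W) (b l : Bool) :
    #(st'.edges b l) =
      #(st.edges b l) + #(W.filter fun w => st'.typ w = b ∧ st'.lev w = l) := by
  rw [← card_union_of_disjoint]
  · congr 1
    ext v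
    simp only [edges, mem_filter, mem_union, h.mem_S]
    by_cases hv : v ∈ st.S
    · have hW : v ∉ W := fun hW => h.disj v hW hv
      by_cases hr : v = τ.root
      · simp [hr, hr ▸ hW]
      · simp [hv, hW, hr, h.typ_eq hv hr, h.lev_eq v hv]
    · by_cases hW : v ∈ W
      · simp [hv, hW, h.ne_root hW]
      · simp [hv, hW]
  · rw [disjoint_left]
    intro v h1 h2
    exact h.disj v (mem_filter.1 h2).1 (mem_filter.1 h1).1

lemma keys_eq (h : st.Ext st' W) (b : Bool) :
    st'.keys b = st.keys b ∪ (W.filter fun w => st'.typ w = b).image st'.key := by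
  ext κ
  simp only [mem_union, mem_keys, mem_image, mem_filter, h.mem_S]
  constructor
  · rintro ⟨v, hv | hv, hr, ht, hk⟩
    · exact Or.inl ⟨v, hv, hr, by rw [← h.typ_eq hv hr, ht], by rw [← h.key_eq hv hr, hk]⟩
    · exact Or.inr ⟨v, ⟨hv, ht⟩, hk⟩
  · rintro (⟨v, hv, hr, ht, hk⟩ | ⟨v, ⟨hv, ht⟩, hk⟩)
    · exact ⟨v, Or.inl hv, hr, by rw [h.typ_eq hv hr, ht], by rw [h.key_eq hv hr, hk]⟩
    · exact ⟨v, Or.inr hv, h.ne_root hv, ht, hk⟩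

lemma occ_eq (h : st.Ext st' W) (l : Bool) :
    st'.occ l = st.occ l ∪ (W.filter fun w => st'.lev w = l).image st'.f := by
  ext z
  simp only [mem_union, mem_occ, mem_image, mem_filter, h.mem_S]
  constructor
  · rintro ⟨v, hv | hv, hl, hf⟩
    · exact Or.inl ⟨v, hv, by rw [← h.lev_eq v hv, hl], by rw [← h.f_eq v hv, hf]⟩
    · exact Or.inr ⟨v, ⟨hv, hl⟩, hf⟩
  · rintro (⟨v, hv, hl, hf⟩ | ⟨v, ⟨hv, hl⟩, hf⟩)
    · exact ⟨v, Or.inl hv, by rw [h.lev_eq v hv, hl], by rw [h.f_eq v hv, hf]⟩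
    · exact ⟨v, Or.inr hv, hl, hf⟩

end Ext

/-- The labeling of the root alone. -/
def single (τ : RTree V) (K : Type) [Field K] : PartialLabeling τ K where
  S := {τ.root}
  f _ := 0
  lev _ := false
  root_mem := mem_singleton_self _
  par_mem _ hv hr := absurd (mem_singleton.1 hv) hr
  inj _ hu _ hv _ _ := (mem_singleton.1 hu).trans (mem_singleton.1 hv).symm
  ne_par _ hv hr := absurd (mem_singleton.1 hv) hr
  rainbow _ hu _ hv _ _ _ _ := (mem_singleton.1 hu).trans (mem_singleton.1 hv).symm

lemma edges_single (b l : Bool) : (single τ K).edges b l = ∅ := by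
  refine filter_eq_empty_iff.2 fun v hv h => h.1 (mem_singleton.1 hv)

lemma keys_single (b : Bool) : (single τ K).keys b = ∅ := by
  refine image_eq_empty.2 (filter_eq_empty_iff.2 fun v hv h => h.1 (mem_singleton.1 hv))

/-- A set closed under taking parents that is not fully placed has an unplaced vertex whose parent
is placed. -/
lemma exists_frontier (st : PartialLabeling τ K) (X : V → Prop)
    (hX : ∀ v, X v → v ≠ τ.root → X (τ.par v)) (h : ∃ v, X v ∧ v ∉ st.S) :
    ∃ v, X v ∧ v ∉ st.S ∧ τ.par v ∈ st.S := by
  have key : ∀ n v, τ.dep v = n → X v → v ∉ st.S → ∃ v, X v ∧ v ∉ st.S ∧ τ.par v ∈ st.S := by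
    intro n
    induction n using Nat.strong_induction_on with
    | _ n ih =>
      intro v hn hv hS
      have hr : v ≠ τ.root := fun e => hS (e ▸ st.root_mem)
      by_cases hp : τ.par v ∈ st.S
      · exact ⟨v, hv, hS, hp⟩
      · exact ih _ (hn ▸ τ.dep_par v hr) _ rfl (hX v hv hr) hp
  obtain ⟨v, hv, hS⟩ := h
  exact key _ v rfl hv hS

end PartialLabeling

section Squares

variable {K : Type} [Field K] [Fintype K] [DecidableEq K]

/-- The nonzero squares of a finite field. -/
def nzSquares (K : Type) [Field K] [Fintype K] [DecidableEq K] : Finset K :=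
  (univ.erase (0 : K)).image fun x => x ^ 2

lemma mem_nzSquares {κ : K} : κ ∈ nzSquares K ↔ ∃ x : K, x ≠ 0 ∧ x ^ 2 = κ := by
  simp [nzSquares]

lemma card_sq_sub_fiber_le (q κ : K) : #(univ.filter fun z : K => (z - q) ^ 2 = κ) ≤ 2 := by
  by_cases h : ∃ x : K, x ^ 2 = κ
  · obtain ⟨x, rfl⟩ := h
    refine (card_le_card (t := {q + x, q - x}) fun z hz => ?_).trans card_le_two
    rcases sq_eq_sq_iff_eq_or_eq_neg.1 (mem_filter.1 hz).2 with h | h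
    · simp [← h]
    · simp [← sub_eq_iff_eq_add'.2 (sub_eq_iff_eq_add'.1 h), sub_eq_add_neg]
  · rw [filter_eq_empty_iff.2 fun z _ hz => h ⟨_, hz⟩]; simp

lemma card_sq_sub_mem_le (q : K) (E : Finset K) :
    #(univ.filter fun z : K => (z - q) ^ 2 ∈ E) ≤ 2 * #E := by
  rw [card_eq_sum_card_fiberwise (s := univ.filter fun z : K => (z - q) ^ 2 ∈ E)
    (f := fun z => (z - q) ^ 2) (t := E) fun z hz => (mem_filter.1 hz).2, mul_comm, ← smul_eq_mul]
  refine sum_le_card_nsmul _ _ _ fun κ _ => ?_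
  exact (card_le_card (filter_subset_filter _ (filter_subset _ _))).trans
    (card_sq_sub_fiber_le q κ)

lemma card_sq_sub_mem (h2 : (2 : K) ≠ 0) (q : K) (E : Finset K) (hE : E ⊆ nzSquares K) :
    #(univ.filter fun z : K => (z - q) ^ 2 ∈ E) = 2 * #E := by
  refine le_antisymm (card_sq_sub_mem_le q E) ?_
  rw [card_eq_sum_card_fiberwise (s := univ.filter fun z : K => (z - q) ^ 2 ∈ E)
    (f := fun z => (z - q) ^ 2) (t := E) fun z hz => (mem_filter.1 hz).2, mul_comm, ← smul_eq_mul]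
  refine card_nsmul_le_sum _ _ _ fun κ hκ => ?_
  obtain ⟨x, hx, rfl⟩ := mem_nzSquares.1 (hE hκ)
  have hne : q + x ≠ q - x := fun h => by
    have : 2 * x = 0 := by linear_combination h
    rcases mul_eq_zero.1 this with h | h
    · exact h2 h
    · exact hx h
  refine (card_pair hne).ge.trans (card_le_card fun z hz => ?_)
  simp only [mem_insert, mem_singleton] at hz
  rcases hz with rfl | rfl <;> simp [hκ]

lemma two_mul_card_nzSquares (h2 : (2 : K) ≠ 0) : 2 * #(nzSquares K) = Fintype.card K - 1 := by
  rw [← card_sq_sub_mem h2 0 _ subset_rfl, ← Finset.card_univ,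
    ← card_erase_of_mem (mem_univ (0 : K))]
  congr 1
  ext z
  simp only [sub_zero, mem_filter, mem_univ, true_and, mem_erase, and_true, mem_nzSquares]
  constructor
  · rintro ⟨x, hx, h⟩ rfl
    exact hx (by simpa using h)
  · exact fun hz => ⟨z, hz, rfl⟩

end Squares

namespace PartialLabeling

variable {K V : Type} [Field K] [DecidableEq K] [DecidableEq V] {τ : RTree V}

lemma Ext.typ_of_mem {st st' : PartialLabeling τ K} {W : Finset V} (h : st.Ext st' W) {w : V}
    (hw : w ∈ W) : st'.typ w = xor (st'.lev w) (st.lev (τ.par w)) := by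
  rw [typ, h.lev_eq _ (h.par_mem w hw)]

lemma Ext.key_of_mem {st st' : PartialLabeling τ K} {W : Finset V} (h : st.Ext st' W) {w : V}
    (hw : w ∈ W) : st'.key w = (st'.f w - st.f (τ.par w)) ^ 2 := by
  rw [key, h.f_eq _ (h.par_mem w hw)]

variable [Fintype K]

lemma keys_subset (st : PartialLabeling τ K) (b : Bool) : st.keys b ⊆ nzSquares K := by
  intro κ hκ
  obtain ⟨v, hv, hr, -, rfl⟩ := mem_keys.1 hκ
  exact mem_nzSquares.2 ⟨_, sub_ne_zero.2 (st.ne_par v hv hr), rfl⟩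

/-- A single vertex can be added greedily when few positions are forbidden. -/
lemma exists_ext_single (st : PartialLabeling τ K) (v : V) (l : Bool) (hv : v ∉ st.S)
    (hp : τ.par v ∈ st.S) (B : Finset K) (hB : st.f (τ.par v) ∈ B ∪ st.occ l)
    (hcard : #(B ∪ st.occ l) + 2 * #(st.keys (xor l (st.lev (τ.par v)))) < Fintype.card K) :
    ∃ st', st.Ext st' {v} ∧ st'.lev v = l ∧ st'.f v ∉ B := by
  set q := st.f (τ.par v) with hq
  set E := st.keys (xor l (st.lev (τ.par v))) with hE
  obtain ⟨z, hz⟩ : ∃ z, z ∉ (B ∪ st.occ l) ∪ univ.filter fun z : K => (z - q) ^ 2 ∈ E := by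
    by_contra! h
    have h1 : #(univ : Finset K) ≤ _ := card_le_card fun z _ => h z
    have h2 := card_union_le (B ∪ st.occ l) (univ.filter fun z : K => (z - q) ^ 2 ∈ E)
    have h3 := card_sq_sub_mem_le q E
    rw [Finset.card_univ] at h1
    omega
  simp only [mem_union, mem_filter, mem_univ, true_and, not_or] at hz
  obtain ⟨⟨hzB, hzo⟩, hzE⟩ := hz
  obtain ⟨st', h1, h2⟩ := st.exists_ext {v} (fun _ => z) (fun _ => l) (by simpa) (by simpa)
    (by simpa) (by
      simp only [mem_singleton, forall_eq]
      rintro rfl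
      rcases mem_union.1 hB with h | h
      · exact hzB h
      · exact hzo h) (by simpa) (by simp) (by simp)
  exact ⟨st', h1, (h2 v (mem_singleton_self v)).2, (h2 v (mem_singleton_self v)).1 ▸ hzB⟩

/-- A set of vertices can be attached by mixed edges with differences from a prescribed set of
squares when the lists of available differences are long enough. -/
lemma exists_ext_mixed (st : PartialLabeling τ K) (U : Finset V) (E : Finset K)
    (hU : ∀ w ∈ U, w ∉ st.S) (hp : ∀ w ∈ U, τ.par w ∈ st.S)
    (hE0 : (0 : K) ∉ E) (hE : Disjoint E (st.keys true))
    (hcard : ∀ w ∈ U, 2 * #U - 1 ≤ #(univ.filter fun x : K =>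
      x ^ 2 ∈ E ∧ x + st.f (τ.par w) ∉ st.occ (!st.lev (τ.par w)))) :
    ∃ st', st.Ext st' U ∧ (∀ w ∈ U, st'.lev w = !st.lev (τ.par w)) ∧
      ∀ w ∈ U, st'.key w ∈ E := by
  let e := U.equivFin
  obtain ⟨x, hx, hsq, hadd⟩ := exists_injective_sq_injective_add
    (fun i => st.f (τ.par (e.symm i))) (fun i => univ.filter fun x : K =>
      x ^ 2 ∈ E ∧ x + st.f (τ.par (e.symm i)) ∉ st.occ (!st.lev (τ.par (e.symm i))))
    fun i => hcard _ (e.symm i).2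
  simp only [mem_filter, mem_univ, true_and] at hx
  let X : V → K := fun w => if h : w ∈ U then x (e ⟨w, h⟩) else 0
  have hX : ∀ w (h : w ∈ U), X w = x (e ⟨w, h⟩) := fun w h => dif_pos h
  have hXE : ∀ w ∈ U, X w ^ 2 ∈ E ∧ X w + st.f (τ.par w) ∉ st.occ (!st.lev (τ.par w)) :=
    fun w h => by
      have := hx (e ⟨w, h⟩)
      rw [e.symm_apply_apply] at this
      rw [hX w h]
      exact this
  obtain ⟨st', h1, h2⟩ := st.exists_ext U (fun w => X w + st.f (τ.par w))
    (fun w => !st.lev (τ.par w)) hU hp (fun w hw => (hXE w hw).2)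
    (fun w hw h => by
      have h0 : X w = 0 := by simpa using h
      have := (hXE w hw).1
      rw [h0] at this
      exact hE0 (by simpa using this))
    (fun w hw => by
      simp only [add_sub_cancel_right, Bool.not_bne_self]
      exact disjoint_left.1 hE (hXE w hw).1)
    (fun u hu v hv h _ => by
      have := @hadd (e ⟨u, hu⟩) (e ⟨v, hv⟩) (by
        simpa only [e.symm_apply_apply, ← hX u hu, ← hX v hv] using h)
      simpa using e.injective this)
    (fun u hu v hv h _ => by
      simp only [add_sub_cancel_right] at h
      have := @hsq (e ⟨u, hu⟩) (e ⟨v, hv⟩) (by simpa only [← hX u hu, ← hX v hv] using h)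
      simpa using e.injective this)
  refine ⟨st', h1, fun w hw => (h2 w hw).2, fun w hw => ?_⟩
  rw [h1.key_of_mem hw, (h2 w hw).1, add_sub_cancel_right]
  exact (hXE w hw).1

end PartialLabeling

namespace RTree

variable {V : Type} [Fintype V] [DecidableEq V] (τ : RTree V)

/-- The children of a vertex. -/
def kids (v : V) : Finset V := univ.filter fun w => w ≠ τ.root ∧ τ.par w = v

/-- The childless non-root vertices. -/
def leaves : Finset V := univ.filter fun v => v ≠ τ.root ∧ τ.kids v = ∅

/-- The childless children of a vertex. -/
def leafKids (v : V) : Finset V := (τ.kids v).filter fun w => w ∈ τ.leaves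

variable {τ}

lemma mem_kids {v w : V} : w ∈ τ.kids v ↔ w ≠ τ.root ∧ τ.par w = v := by simp [kids]

lemma mem_leafKids {v w : V} : w ∈ τ.leafKids v ↔ w ∈ τ.leaves ∧ τ.par w = v := by
  simp only [leafKids, mem_filter, mem_kids, leaves, mem_univ, true_and]
  tauto

lemma ne_root_of_mem_leaves {v : V} (hv : v ∈ τ.leaves) : v ≠ τ.root := (mem_filter.1 hv).2.1

lemma par_notMem_leaves {v : V} (hv : v ≠ τ.root) : τ.par v ∉ τ.leaves := fun h => by
  have := (mem_filter.1 h).2.2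
  exact notMem_empty v (this ▸ mem_kids.2 ⟨hv, rfl⟩)

lemma root_notMem_leaves : τ.root ∉ τ.leaves := fun h => ne_root_of_mem_leaves h rfl

lemma exists_kid {v : V} (hv : v ∉ τ.leaves) (hr : v ≠ τ.root) :
    ∃ w, w ≠ τ.root ∧ τ.par w = v := by
  by_contra! h
  refine hv (mem_filter.2 ⟨mem_univ _, hr, eq_empty_of_forall_notMem fun w hw => ?_⟩)
  exact h w (mem_kids.1 hw).1 (mem_kids.1 hw).2

end RTree

namespace PartialLabeling

variable {K V : Type} [Field K] [DecidableEq K] [Fintype V] [DecidableEq V] {τ : RTree V}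

lemma exists_of_progress (I P : PartialLabeling τ K → Prop)
    (h : ∀ st, I st → P st ∨ ∃ st', I st' ∧ #st.S < #st'.S) (st₀ : PartialLabeling τ K)
    (h₀ : I st₀) : ∃ st, I st ∧ P st := by
  have key : ∀ n (st : PartialLabeling τ K), Fintype.card V - #st.S = n → I st →
      ∃ st, I st ∧ P st := by
    intro n
    induction n using Nat.strong_induction_on with
    | _ n ih =>
      intro st hn hI
      rcases h st hI with hP | ⟨st', hI', hlt⟩
      · exact ⟨st, hI, hP⟩
      · have := card_le_univ st'.S
        exact ih _ (by omega) st' rfl hI'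
  exact key _ st₀ rfl h₀

lemma card_keys_add (st : PartialLabeling τ K) :
    #(st.keys false) + #(st.keys true) + 1 = #st.S := by
  rw [card_keys, card_keys, card_S]; ring

lemma card_occ_le (st : PartialLabeling τ K) (l : Bool) : #(st.occ l) ≤ #st.S := by
  rw [card_occ]; exact card_filter_le _ _

lemma Ext.card_S {st st' : PartialLabeling τ K} {W : Finset V} (h : st.Ext st' W) :
    #st'.S = #st.S + #W := by
  rw [h.S_eq, card_union_of_disjoint (disjoint_right.2 h.disj)]

variable [Fintype K] {m k : ℕ}

/-- All vertices outside a set of leaves can be placed on one level. -/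
lemma exists_pure (hK : Fintype.card K = 2 * m + 1) (hV : Fintype.card V = m + 1)
    (hk : 2 * m ≤ 5 * k) (L : Finset V) (hL : L ⊆ τ.leaves) (hLk : #L = k) :
    ∃ st : PartialLabeling τ K, st.S = Lᶜ ∧ ∀ v ∈ st.S, st.lev v = false := by
  obtain ⟨st, ⟨h1, h2⟩, h3⟩ := exists_of_progress (τ := τ) (K := K)
    (fun st => st.S ⊆ Lᶜ ∧ ∀ v ∈ st.S, st.lev v = false) (fun st => Lᶜ ⊆ st.S)
    (fun st ⟨hS, hlev⟩ => by
      by_contra! hcon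
      obtain ⟨hne, hmax⟩ := hcon
      obtain ⟨v₀, hv₀, hv₀S⟩ := not_subset.1 hne
      obtain ⟨v, hv, hvS, hp⟩ := st.exists_frontier (fun v => v ∉ L)
        (fun v _ hr h => RTree.par_notMem_leaves hr (hL h)) ⟨v₀, mem_compl.1 hv₀, hv₀S⟩
      have hc : #(insert v st.S) ≤ #Lᶜ :=
        card_le_card (insert_subset (mem_compl.2 hv) hS)
      rw [card_insert_of_notMem hvS, card_compl] at hc
      have h1 := st.card_keys_add
      have h2 := st.card_occ_le false
      obtain ⟨st', he, hl, -⟩ := st.exists_ext_single v false hvS hp ∅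
        (by rw [empty_union, mem_occ]; exact ⟨_, hp, hlev _ hp, rfl⟩)
        (by rw [hlev _ hp, empty_union, Bool.xor_self]; omega)
      have := hmax st' ⟨?_, ?_⟩
      · rw [he.card_S, card_singleton] at this; omega
      · rw [he.S_eq]
        exact union_subset hS (singleton_subset_iff.2 (mem_compl.2 hv))
      · intro w hw
        rcases he.mem_S.1 hw with hw | hw
        · rw [he.lev_eq w hw, hlev w hw]
        · rw [mem_singleton.1 hw, hl])
    (single τ K)
    ⟨singleton_subset_iff.2 (mem_compl.2 fun h => RTree.root_notMem_leaves (hL h)),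
      fun _ _ => rfl⟩
  exact ⟨st, subset_antisymm h1 h3, h2⟩

/-- A one-level labeling of the complement of a set of leaves extends to all vertices with
prescribed mixed differences. -/
lemma exists_of_pure (h2 : (2 : K) ≠ 0) (L : Finset V) (hL : L ⊆ τ.leaves)
    (st : PartialLabeling τ K) (hS : st.S = Lᶜ) (hlev : ∀ v ∈ st.S, st.lev v = false)
    (E : Finset K) (hE : E ⊆ nzSquares K) (hcard : #E = #L) :
    ∃ st' : PartialLabeling τ K, st'.S = univ ∧ st'.keys false = st.keys false ∧
      st'.keys true = E := by
  have hmix : st.keys true = ∅ := eq_empty_of_forall_notMem fun κ hκ => by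
    obtain ⟨v, hv, hr, ht, -⟩ := mem_keys.1 hκ
    rw [typ, hlev v hv, hlev _ (st.par_mem v hv hr)] at ht
    simp at ht
  have hocc : st.occ true = ∅ := eq_empty_of_forall_notMem fun κ hκ => by
    obtain ⟨v, hv, hl, -⟩ := mem_occ.1 hκ
    rw [hlev v hv] at hl
    simp at hl
  have hp : ∀ w ∈ L, τ.par w ∈ st.S := fun w hw => by
    rw [hS, mem_compl]
    exact fun h => RTree.par_notMem_leaves (RTree.ne_root_of_mem_leaves (hL hw)) (hL h)
  obtain ⟨st', he, hl, hkE⟩ := st.exists_ext_mixed L E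
    (fun w hw => by rw [hS, mem_compl, not_not]; exact hw) hp
    (fun h => by obtain ⟨x, hx, h⟩ := mem_nzSquares.1 (hE h); exact hx (by simpa using h))
    (by rw [hmix]; exact disjoint_empty_right _)
    (fun w hw => by
      rw [hlev _ (hp w hw), Bool.not_false, hocc]
      have := card_sq_sub_mem h2 0 E hE
      simp only [sub_zero] at this
      simp only [notMem_empty, not_false_eq_true, and_true, this]
      omega)
  have htyp : ∀ w ∈ L, st'.typ w = true := fun w hw => by
    rw [he.typ_of_mem hw, hl w hw, hlev _ (hp w hw)]; rfl
  have hpure : st'.keys false = st.keys false := by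
    rw [he.keys_eq, filter_eq_empty_iff.2 fun w hw => by simp [htyp w hw]]
    simp
  refine ⟨st', by rw [he.S_eq, hS]; rw [union_comm, union_compl], hpure, ?_⟩
  refine eq_of_subset_of_card_le ?_ ?_
  · rw [he.keys_eq, hmix, empty_union]
    exact image_subset_iff.2 fun w hw => hkE w (mem_filter.1 hw).1
  · have h1 := st.card_keys_add
    have h2 := st'.card_keys_add
    rw [he.card_S, hpure] at h2
    rw [hmix, card_empty] at h1
    omega

end PartialLabeling

namespace PartialLabeling

variable {K V : Type} [Field K] [DecidableEq K] [Fintype V] [DecidableEq V]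
  {τ : RTree V} {D : Finset K} {rt : K → K} {st st' : PartialLabeling τ K}

/-- The classes of `D` not yet realised by pure edges. -/
def rem (D : Finset K) (st : PartialLabeling τ K) : Finset K := D \ st.keys false

/-- The pure edges realise classes of `D`, and for each remaining class a position next to the
root is reserved. -/
structure Good (D : Finset K) (rt : K → K) (st : PartialLabeling τ K) : Prop where
  lev_root : st.lev τ.root = false
  keys_sub : st.keys false ⊆ D
  res : ∀ v ∈ st.S, v ≠ τ.root → st.lev v = false → ∀ κ ∈ rem D st,
    st.f v ≠ st.f τ.root + rt κ

/-- The occupied or reserved positions on level `l`. -/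
def blocked (D : Finset K) (rt : K → K) (st : PartialLabeling τ K) (l : Bool) : Finset K :=
  st.occ l ∪ ((rem D st).filter fun _ => l = false).image fun κ => st.f τ.root + rt κ

/-- `st'` arises from `st` by adding the vertices `N` on level `l`, with `a` new pure edges and
`b` new mixed edges. -/
structure Step (st st' : PartialLabeling τ K) (N : Finset V) (l : Bool) (a b : ℕ) : Prop where
  S_eq : st'.S = st.S ∪ N
  disj : ∀ w ∈ N, w ∉ st.S
  lev_eq : ∀ v ∈ st.S, st'.lev v = st.lev v
  lev_new : ∀ v ∈ N, st'.lev v = l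
  pure_eq : #(st'.edges false l) = #(st.edges false l) + a
  mixed_eq : #(st'.edges true l) = #(st.edges true l) + b
  pure_ne : #(st'.edges false !l) = #(st.edges false !l)
  mixed_ne : #(st'.edges true !l) = #(st.edges true !l)

lemma Step.mem_S {N : Finset V} {l : Bool} {a b : ℕ} (h : st.Step st' N l a b) {v : V} :
    v ∈ st'.S ↔ v ∈ st.S ∨ v ∈ N := by
  rw [h.S_eq, mem_union]

lemma Step.card_S {N : Finset V} {l : Bool} {a b : ℕ} (h : st.Step st' N l a b) :
    #st'.S = #st.S + #N := by
  rw [h.S_eq, card_union_of_disjoint (disjoint_right.2 h.disj)]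

lemma Step.trans {st'' : PartialLabeling τ K} {N N' : Finset V} {l : Bool} {a b a' b' : ℕ}
    (h : st.Step st' N l a b) (h' : st'.Step st'' N' l a' b') :
    st.Step st'' (N ∪ N') l (a + a') (b + b') where
  S_eq := by rw [h'.S_eq, h.S_eq, union_assoc]
  disj w hw hS := by
    rcases mem_union.1 hw with hw | hw
    · exact h.disj w hw hS
    · exact h'.disj w hw (h.mem_S.2 (Or.inl hS))
  lev_eq v hv := by rw [h'.lev_eq v (h.mem_S.2 (Or.inl hv)), h.lev_eq v hv]
  lev_new v hv := by
    by_cases hS : v ∈ st'.S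
    · rw [h'.lev_eq v hS]
      rcases mem_union.1 hv with hv | hv
      · exact h.lev_new v hv
      · exact absurd hS (h'.disj v hv)
    · rcases mem_union.1 hv with hv | hv
      · exact absurd (h.mem_S.2 (Or.inr hv)) hS
      · exact h'.lev_new v hv
  pure_eq := by rw [h'.pure_eq, h.pure_eq, add_assoc]
  mixed_eq := by rw [h'.mixed_eq, h.mixed_eq, add_assoc]
  pure_ne := by rw [h'.pure_ne, h.pure_ne]
  mixed_ne := by rw [h'.mixed_ne, h.mixed_ne]

lemma Ext.step {W : Finset V} (h : st.Ext st' W) {l t : Bool}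
    (hl : ∀ w ∈ W, st'.lev w = l) (ht : ∀ w ∈ W, st'.typ w = t) :
    st.Step st' W l (if t then 0 else #W) (if t then #W else 0) := by
  have hc : ∀ b l', #(st'.edges b l') = #(st.edges b l') + if b = t ∧ l' = l then #W else 0 := by
    intro b l'
    rw [h.card_edges]
    congr 1
    split_ifs with hb
    · rw [filter_true_of_mem fun w hw => ⟨by rw [ht w hw, hb.1], by rw [hl w hw, hb.2]⟩]
    · rw [filter_false_of_mem, card_empty]
      rintro w hw ⟨h1, h2⟩
      exact hb ⟨by rw [← h1, ht w hw], by rw [← h2, hl w hw]⟩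
  refine ⟨h.S_eq, h.disj, h.lev_eq, hl, ?_, ?_, ?_, ?_⟩ <;> rw [hc] <;> cases t <;> simp

lemma Good.card_rem (hg : Good D rt st) :
    #(rem D st) + #(st.edges false false) + #(st.edges false true) = #D := by
  have := card_sdiff_add_card_eq_card hg.keys_sub
  rw [card_keys] at this
  rw [rem]
  omega

lemma Good.card_blocked_false_le (hg : Good D rt st) :
    #(blocked D rt st false) ≤
      1 + #(st.edges false false) + #(st.edges true false) + #(rem D st) := by
  have h1 := card_union_le (st.occ false)
    (((rem D st).filter fun _ => false = false).image fun κ => st.f τ.root + rt κ)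
  have h2 : #(((rem D st).filter fun _ => false = false).image fun κ => st.f τ.root + rt κ) ≤
    #(rem D st) := card_image_le.trans (card_filter_le _ _)
  rw [card_occ, card_filter_lev, hg.lev_root, if_pos rfl] at h1
  exact h1.trans (by omega)

lemma Good.card_blocked_true (hg : Good D rt st) :
    #(blocked D rt st true) = #(st.edges false true) + #(st.edges true true) := by
  rw [blocked, filter_false_of_mem (by simp), image_empty, union_empty, card_occ, card_filter_lev,
    hg.lev_root, if_neg (by simp), zero_add]

lemma occ_subset_blocked (l : Bool) : st.occ l ⊆ blocked D rt st l := subset_union_left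

lemma ne_of_notMem_blocked {z κ : K} (hz : z ∉ blocked D rt st false) (hκ : κ ∈ rem D st) :
    z ≠ st.f τ.root + rt κ := by
  rintro rfl
  exact hz (mem_union_right _ (mem_image.2 ⟨κ, mem_filter.2 ⟨hκ, rfl⟩, rfl⟩))

lemma Good.of_ext (hg : Good D rt st) {W : Finset V} (h : st.Ext st' W)
    (hD : ∀ w ∈ W, st'.typ w = false → st'.key w ∈ D)
    (hres : ∀ w ∈ W, st'.lev w = false → ∀ κ ∈ rem D st', st'.f w ≠ st.f τ.root + rt κ) :
    Good D rt st' where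
  lev_root := by rw [h.lev_eq _ st.root_mem, hg.lev_root]
  keys_sub := by
    rw [h.keys_eq]
    refine union_subset hg.keys_sub (image_subset_iff.2 fun w hw => ?_)
    exact hD w (mem_filter.1 hw).1 (mem_filter.1 hw).2
  res v hv hr hl κ hκ := by
    rw [h.f_eq _ st.root_mem]
    rcases h.mem_S.1 hv with hv | hv
    · rw [h.f_eq v hv]
      rw [h.lev_eq v hv] at hl
      refine hg.res v hv hr hl κ (mem_sdiff.2 ⟨(mem_sdiff.1 hκ).1, fun hk => ?_⟩)
      exact (mem_sdiff.1 hκ).2 (by rw [h.keys_eq]; exact mem_union_left _ hk)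
    · exact hres v hv hl κ hκ

/-- Children of a placed vertex can be attached by pure edges realising remaining classes. -/
lemma Good.exists_place_kids (hg : Good D rt st) (hD0 : (0 : K) ∉ D) {x : V} (hx : x ∈ st.S)
    (W : Finset V) (hW : ∀ w ∈ W, τ.par w = x ∧ w ∉ st.S) (C : Finset K) (hC : C ⊆ rem D st)
    (hcard : #W ≤ #C)
    (hpos : ∀ κ ∈ C, ∃ z, (z - st.f x) ^ 2 = κ ∧ z ∉ st.occ (st.lev x) ∧
      (st.lev x = false → ∀ κ' ∈ rem D st, κ' ≠ κ → z ≠ st.f τ.root + rt κ')) :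
    ∃ st', Good D rt st' ∧ st.Step st' W (st.lev x) #W 0 ∧ st'.keys true = st.keys true := by
  obtain ⟨C', hC', hcard'⟩ := exists_subset_card_eq hcard
  let e : W ≃ C' := W.equivOfCardEq hcard'.symm
  choose! pos hpos1 hpos2 hpos3 using hpos
  let c : V → K := fun w => if h : w ∈ W then e ⟨w, h⟩ else 0
  have hc : ∀ w (h : w ∈ W), c w = e ⟨w, h⟩ := fun w h => dif_pos h
  have hcC : ∀ w ∈ W, c w ∈ C := fun w h => by rw [hc w h]; exact hC' (e ⟨w, h⟩).2
  have hcinj : ∀ u ∈ W, ∀ v ∈ W, c u = c v → u = v := fun u hu v hv h => by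
    rw [hc u hu, hc v hv] at h
    simpa using e.injective (Subtype.ext h)
  have hkey : ∀ w ∈ W, (pos (c w) - st.f (τ.par w)) ^ 2 = c w := fun w hw => by
    rw [(hW w hw).1]; exact hpos1 _ (hcC w hw)
  obtain ⟨st', he, hf⟩ := st.exists_ext W (fun w => pos (c w)) (fun _ => st.lev x)
    (fun w hw => (hW w hw).2) (fun w hw => (hW w hw).1 ▸ hx)
    (fun w hw => hpos2 _ (hcC w hw))
    (fun w hw h => by
      have h1 := hkey w hw
      rw [h, sub_self, zero_pow two_ne_zero] at h1
      have h2 := (mem_sdiff.1 (hC (hcC w hw))).1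
      rw [← h1] at h2
      exact hD0 h2)
    (fun w hw => by
      rw [hkey w hw, (hW w hw).1, Bool.xor_self]
      exact (mem_sdiff.1 (hC (hcC w hw))).2)
    (fun u hu v hv h _ => hcinj u hu v hv (by
      have h1 := hkey u hu
      rw [h, (hW u hu).1, ← (hW v hv).1, hkey v hv] at h1
      exact h1.symm))
    (fun u hu v hv h _ => hcinj u hu v hv (by rwa [hkey u hu, hkey v hv] at h))
  have htyp : ∀ w ∈ W, st'.typ w = false := fun w hw => by
    rw [he.typ_of_mem hw, (hf w hw).2, (hW w hw).1, Bool.xor_self]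
  have hkey' : ∀ w ∈ W, st'.key w = c w := fun w hw => by
    rw [he.key_of_mem hw, (hf w hw).1, hkey w hw]
  have hstep := he.step (fun w hw => (hf w hw).2) htyp
  refine ⟨st', hg.of_ext he (fun w hw _ => ?_) (fun w hw hl κ hκ => ?_), by simpa using hstep, ?_⟩
  · rw [hkey' w hw]; exact (mem_sdiff.1 (hC (hcC w hw))).1
  · rw [(hf w hw).2] at hl
    rw [(hf w hw).1]
    obtain ⟨hκD, hκk⟩ := mem_sdiff.1 hκ
    rw [he.keys_eq, mem_union, not_or] at hκk
    refine hpos3 _ (hcC w hw) hl κ (mem_sdiff.2 ⟨hκD, hκk.1⟩) fun h => hκk.2 ?_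
    exact mem_image.2 ⟨w, mem_filter.2 ⟨hw, htyp w hw⟩, by rw [hkey' w hw, h]⟩
  · rw [he.keys_eq, filter_false_of_mem fun w hw => by simp [htyp w hw]]
    simp

variable [Fintype K] {m : ℕ}

lemma zero_notMem_of_subset_nzSquares {D : Finset K} (hD : D ⊆ nzSquares K) : (0 : K) ∉ D :=
  fun h => by
    obtain ⟨x, hx, h⟩ := mem_nzSquares.1 (hD h)
    exact hx (by simpa using h)

/-- One vertex can be attached by a pure edge if enough classes remain. -/
lemma Good.exists_pure_step (hg : Good D rt st) (h2 : (2 : K) ≠ 0) (hD : D ⊆ nzSquares K)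
    {v : V} (hv : v ∉ st.S) (hp : τ.par v ∈ st.S)
    (hcard : #(blocked D rt st (st.lev (τ.par v))) < 2 * #(rem D st)) :
    ∃ st', Good D rt st' ∧ st.Step st' {v} (st.lev (τ.par v)) 1 0 := by
  rw [← card_sq_sub_mem h2 (st.f (τ.par v)) (rem D st) (sdiff_subset.trans hD)] at hcard
  obtain ⟨z, hz, hzB⟩ := exists_mem_notMem_of_card_lt_card hcard
  have hκ := (mem_filter.1 hz).2
  obtain ⟨st', h1, h2, -⟩ := hg.exists_place_kids (zero_notMem_of_subset_nzSquares hD) hp {v}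
    (by simpa using hv) {(z - st.f (τ.par v)) ^ 2} (singleton_subset_iff.2 hκ) (by simp) (by
      simp only [mem_singleton, forall_eq]
      refine ⟨z, rfl, fun h => hzB (occ_subset_blocked _ h), fun hl κ' hκ' _ => ?_⟩
      rw [hl] at hzB
      exact ne_of_notMem_blocked hzB hκ')
  exact ⟨st', h1, by simpa using h2⟩

/-- An averaging argument: some admissible position sees at least half of the classes. -/
lemma exists_position (hK : Fintype.card K = 2 * m + 1) (B R E : Finset K) (rt : K → K) (q : K)
    (hB : 3 * #B + 2 * #E ≤ 2 * m) (hE : #E < m) :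
    ∃ z, z ∉ B ∧ z ≠ q ∧ (z - q) ^ 2 ∉ E ∧
      #R ≤ 2 * #(R.filter fun κ => z + rt κ ∉ B ∨ z - rt κ ∉ B) := by
  by_contra! hcon
  let X : Finset K := (B ∪ {q}) ∪ univ.filter fun z : K => (z - q) ^ 2 ∈ E
  have hX : #X ≤ #B + 1 + 2 * #E :=
    (card_union_le _ _).trans (add_le_add ((card_union_le _ _).trans (by simp))
      (card_sq_sub_mem_le q E))
  have hbad : ∀ z ∈ Xᶜ, #R + 1 ≤ 2 * #(R.filter fun κ => z + rt κ ∈ B) := by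
    intro z hz
    simp only [X, mem_compl, mem_union, mem_singleton, mem_filter, mem_univ, true_and,
      not_or] at hz
    have h1 := hcon z hz.1.1 hz.1.2 hz.2
    have h2 := card_filter_add_card_filter_not (s := R)
      (fun κ => z + rt κ ∉ B ∨ z - rt κ ∉ B)
    have h3 : #(R.filter fun κ => ¬(z + rt κ ∉ B ∨ z - rt κ ∉ B)) ≤
        #(R.filter fun κ => z + rt κ ∈ B) :=
      card_le_card (monotone_filter_right _ fun κ _ h => by
        rw [not_or, not_not] at h; exact h.1)
    omega
  have hsum : ∑ z : K, #(R.filter fun κ => z + rt κ ∈ B) = #R * #B := by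
    have := sum_card_bipartiteAbove_eq_sum_card_bipartiteBelow (s := (univ : Finset K)) (t := R)
      (fun z κ => z + rt κ ∈ B)
    simp only [bipartiteAbove, bipartiteBelow] at this
    rw [this, ← smul_eq_mul]
    refine sum_const_nat fun κ _ => ?_
    refine card_bij (fun z _ => z + rt κ) (fun z hz => (mem_filter.1 hz).2)
      (fun _ _ _ _ h => add_right_cancel h)
      fun y hy => ⟨y - rt κ, by simpa using hy, by simp⟩
  have h1 : #Xᶜ * (#R + 1) ≤ 2 * (#R * #B) := by
    rw [← hsum, mul_sum, ← smul_eq_mul]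
    refine (card_nsmul_le_sum _ _ _ hbad).trans (sum_le_univ_sum_of_nonneg fun _ => Nat.zero_le _)
  have h2 : 2 * #B ≤ #Xᶜ ∧ 1 ≤ #Xᶜ := by rw [card_compl, hK]; omega
  rcases Nat.eq_zero_or_pos #B with h0 | h0
  · have := Nat.mul_le_mul h2.2 (Nat.le_add_left 1 #R)
    rw [h0] at h1
    omega
  · nlinarith [Nat.mul_le_mul_right (#R + 1) h2.1]

/-- A vertex can be attached by a mixed edge, together with a few of its children by pure edges. -/
lemma Good.exists_star_step (hg : Good D rt st) (hK : Fintype.card K = 2 * m + 1)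
    (hD : D ⊆ nzSquares K) (hrt : ∀ κ ∈ D, rt κ ^ 2 = κ) {u : V} (hu : u ∉ st.S)
    (hp : τ.par u ∈ st.S) {l : Bool} (hl : l = !st.lev (τ.par u)) (W : Finset V)
    (hW : ∀ w ∈ W, τ.par w = u ∧ w ≠ τ.root) (hWc : 2 * #W ≤ #(rem D st) + 1)
    (hB : 3 * #(blocked D rt st l) +
      2 * (#(st.edges true false) + #(st.edges true true)) ≤ 2 * m)
    (hE : #(st.edges true false) + #(st.edges true true) < m) :
    ∃ st', Good D rt st' ∧ st.Step st' ({u} ∪ W) l #W 1 := by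
  rw [← card_keys] at hB hE
  obtain ⟨z, hzB, hzq, hzE, hzC⟩ := exists_position hK (blocked D rt st l) (rem D st)
    (st.keys true) rt (st.f (τ.par u)) hB hE
  obtain ⟨st₁, he, hf⟩ := st.exists_ext {u} (fun _ => z) (fun _ => l) (by simpa) (by simpa)
    (by simpa using fun h => hzB (occ_subset_blocked _ h)) (by simpa)
    (by simpa [hl] using hzE) (by simp) (by simp)
  obtain ⟨hfu, hlu⟩ := hf u (mem_singleton_self u)
  have htyp : ∀ w ∈ ({u} : Finset V), st₁.typ w = true := fun w hw => by
    rw [he.typ_of_mem hw, (hf w hw).2, mem_singleton.1 hw, hl]; simp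
  have hrem : rem D st₁ = rem D st := by
    rw [rem, rem, he.keys_eq, filter_false_of_mem fun w hw => by simp [htyp w hw]]
    simp
  have hg₁ : Good D rt st₁ := hg.of_ext he (fun w hw h => by simp [htyp w hw] at h)
    (fun w hw hlw κ hκ => by
      rw [(hf w hw).2] at hlw
      rw [(hf w hw).1]
      rw [hlw] at hzB
      exact ne_of_notMem_blocked hzB (hrem ▸ hκ))
  have hstep₁ := he.step (l := l) (fun w hw => (hf w hw).2) htyp
  obtain ⟨st', hg', hs', -⟩ := hg₁.exists_place_kids (zero_notMem_of_subset_nzSquares hD)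
    (x := u) (he.mem_S.2 (Or.inr (mem_singleton_self u))) W
    (fun w hw => ⟨(hW w hw).1, fun h => by
      rcases he.mem_S.1 h with h | h
      · exact hu ((hW w hw).1 ▸ st.par_mem w h (hW w hw).2)
      · have h1 := τ.dep_par w (hW w hw).2
        rw [(hW w hw).1, mem_singleton.1 h] at h1
        exact lt_irrefl _ h1⟩)
    ((rem D st).filter fun κ => z + rt κ ∉ blocked D rt st l ∨ z - rt κ ∉ blocked D rt st l)
    (hrem ▸ filter_subset _ _) (by omega) (by
      intro κ hκ
      obtain ⟨hκ, hor⟩ := mem_filter.1 hκ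
      have hκD := (mem_sdiff.1 hκ).1
      obtain ⟨y, hy, hyB⟩ : ∃ y, y ^ 2 = κ ∧ z + y ∉ blocked D rt st l := by
        rcases hor with h | h
        · exact ⟨_, hrt κ hκD, h⟩
        · exact ⟨-rt κ, by rw [neg_sq, hrt κ hκD], by rwa [← sub_eq_add_neg]⟩
      refine ⟨z + y, by rw [hfu, add_sub_cancel_left, hy], ?_, fun h κ' hκ' _ => ?_⟩
      · rw [hlu, he.occ_eq, mem_union, not_or]
        refine ⟨fun h => hyB (occ_subset_blocked _ h), fun h => ?_⟩
        obtain ⟨w, hw, h⟩ := mem_image.1 h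
        rw [mem_singleton.1 (mem_filter.1 hw).1, hfu, left_eq_add] at h
        rw [h, zero_pow two_ne_zero] at hy
        exact zero_notMem_of_subset_nzSquares hD (hy ▸ hκD)
      · rw [hlu] at h
        rw [h] at hyB
        rw [he.f_eq _ st.root_mem]
        exact ne_of_notMem_blocked hyB (hrem ▸ hκ'))
  rw [hlu] at hs'
  refine ⟨st', hg', ?_⟩
  have := hstep₁.trans hs'
  simpa using this

end PartialLabeling

namespace PartialLabeling

variable {K V : Type} [Field K] [DecidableEq K] [Fintype V] [DecidableEq V]
  {τ : RTree V} {D : Finset K} {rt : K → K} {st st' : PartialLabeling τ K}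

/-- No leaf attached to the root has been placed. -/
def Clean (st : PartialLabeling τ K) : Prop := ∀ w ∈ τ.leafKids τ.root, w ∉ st.S

/-- Every unplaced leaf with a placed parent is attached to a vertex of `Q`. -/
def Pending (st : PartialLabeling τ K) (Q : Finset V) : Prop :=
  ∀ w ∈ τ.leaves, w ∉ st.S → τ.par w ∈ st.S → τ.par w ∈ Q

lemma Clean.step (h : Clean st) {N : Finset V} {l : Bool} {a b : ℕ} (hs : st.Step st' N l a b)
    (hN : ∀ w ∈ N, w ∈ τ.leaves → τ.par w ≠ τ.root) : Clean st' := fun w hw hS => by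
  have := RTree.mem_leafKids.1 hw
  rcases hs.mem_S.1 hS with hS | hS
  · exact h w hw hS
  · exact hN w hS this.1 this.2

lemma Pending.step {Q Q' : Finset V} (h : Pending st Q) {N : Finset V} {l : Bool} {a b : ℕ}
    (hs : st.Step st' N l a b) (hQ : Q ⊆ Q')
    (hN : ∀ u ∈ N, ∀ w ∈ τ.leaves, τ.par w = u → w ∉ N → u ∈ Q') : Pending st' Q' :=
  fun w hw hS hp => by
    rw [hs.mem_S, not_or] at hS
    rcases hs.mem_S.1 hp with hp | hp
    · exact hQ (h w hw hS.1 hp)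
    · exact hN _ hp w hw rfl hS.2

lemma Pending.card_le {Q : Finset V} (h : Pending st Q) (hT : ∀ v, v ∉ τ.leaves → v ∈ st.S)
    {s : ℕ} (hs : ∀ v, #(τ.leafKids v) ≤ s) : Fintype.card V ≤ #st.S + #Q * s := by
  rw [← Finset.card_univ]
  have hsub : (univ : Finset V) ⊆ st.S ∪ Q.biUnion τ.leafKids := fun v _ => by
    by_cases hv : v ∈ st.S
    · exact mem_union_left _ hv
    · have hl : v ∈ τ.leaves := by
        by_contra hl
        exact hv (hT v hl)
      refine mem_union_right _ (mem_biUnion.2 ⟨τ.par v, ?_, RTree.mem_leafKids.2 ⟨hl, rfl⟩⟩)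
      exact h v hl hv (hT _ (RTree.par_notMem_leaves (RTree.ne_root_of_mem_leaves hl)))
  exact (card_le_card hsub).trans ((card_union_le _ _).trans
    (by gcongr; exact card_biUnion_le_card_mul _ _ _ fun v _ => hs v))

lemma exists_inner_frontier (st : PartialLabeling τ K) (h : ¬ ∀ v, v ∉ τ.leaves → v ∈ st.S) :
    ∃ v, v ∉ τ.leaves ∧ v ∉ st.S ∧ τ.par v ∈ st.S := by
  push Not at h
  exact st.exists_frontier (fun v => v ∉ τ.leaves) (fun v _ hr => RTree.par_notMem_leaves hr) h

variable [Fintype K] {m k : ℕ}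

/-- The standing assumptions for constructing a labeling whose pure edges realise the set `D`. -/
structure Setup (τ : RTree V) (D : Finset K) (rt : K → K) (m k : ℕ) : Prop where
  card_field : Fintype.card K = 2 * m + 1
  card_vert : Fintype.card V = m + 1
  two_ne : (2 : K) ≠ 0
  D_sub : D ⊆ nzSquares K
  card_D : #D = k
  rt_sq : ∀ κ ∈ D, rt κ ^ 2 = κ
  leafKids_le : ∀ v, #(τ.leafKids v) ≤ #(τ.leafKids τ.root)
  leafKids_pos : 1 ≤ #(τ.leafKids τ.root)
  le_k : 2 * m ≤ 5 * k
  k_le : 5 * k ≤ 2 * m + 4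
  five_le : 5 ≤ m

lemma good_single (τ : RTree V) (D : Finset K) (rt : K → K) : Good D rt (single τ K) where
  lev_root := rfl
  keys_sub := by rw [keys_single]; exact empty_subset _
  res v hv hr := absurd (mem_singleton.1 hv) hr

/-- Pure placement on the level of the root, until about half of the classes are used. -/
lemma Setup.exists_first_phase (su : Setup τ D rt m k) :
    ∃ st : PartialLabeling τ K, (Good D rt st ∧ Clean st ∧ #(st.edges false true) = 0 ∧
      #(st.edges true false) = 0 ∧ #(st.edges true true) = 0 ∧ (∀ v ∈ st.S, st.lev v = false) ∧
      ∃ q, Pending st {τ.root, q}) ∧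
      (#(rem D st) ≤ #(τ.leafKids τ.root) ∨ 2 * #(rem D st) ≤ k + 1) := by
  refine exists_of_progress _ _ ?_ (single τ K) ⟨good_single τ D rt, fun w hw hS => ?_,
    by rw [edges_single, card_empty], by rw [edges_single, card_empty],
    by rw [edges_single, card_empty], fun _ _ => rfl, τ.root, fun w _ _ h => ?_⟩
  · rintro st ⟨hg, hc, h1, h2, h3, hlev, q, hq⟩
    rw [or_iff_not_imp_left]
    intro hr
    push Not at hr
    have hrem := hg.card_rem
    have hcD := su.card_D
    have hbl := hg.card_blocked_false_le
    have hpure : ∀ v, v ∉ st.S → τ.par v ∈ st.S →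
        ∃ st', Good D rt st' ∧ st.Step st' {v} false 1 0 := fun v hv hp => by
      have := hg.exists_pure_step su.two_ne su.D_sub hv hp (by rw [hlev _ hp]; omega)
      rwa [hlev _ hp] at this
    have hlev' : ∀ {st' : PartialLabeling τ K} {v}, st.Step st' {v} false 1 0 →
        ∀ w ∈ st'.S, st'.lev w = false := fun hs w hw => by
      rcases hs.mem_S.1 hw with hw | hw
      · rw [hs.lev_eq w hw, hlev w hw]
      · exact hs.lev_new w hw
    by_cases hpend : ∃ w ∈ τ.leaves, w ∉ st.S ∧ τ.par w ∈ st.S ∧ τ.par w ≠ τ.root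
    · obtain ⟨w, hw, hwS, hp, hpr⟩ := hpend
      obtain ⟨st', hg', hs⟩ := hpure w hwS hp
      refine ⟨st', ⟨hg', hc.step hs (by simpa using fun _ => hpr), hs.pure_ne.trans h1,
        hs.mixed_eq.trans h2, hs.mixed_ne.trans h3, hlev' hs, q, hq.step hs subset_rfl ?_⟩,
        by rw [hs.card_S]; simp⟩
      intro u hu x hx hxu
      rw [mem_singleton.1 hu] at hxu
      exact absurd hw (hxu ▸ RTree.par_notMem_leaves (RTree.ne_root_of_mem_leaves hx))
    · push Not at hpend
      have hq' : Pending st {τ.root} := fun w hw hS hp => mem_singleton.2 (hpend w hw hS hp)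
      by_cases hT : ∀ v, v ∉ τ.leaves → v ∈ st.S
      · have := hq'.card_le hT su.leafKids_le
        rw [su.card_vert, card_singleton, st.card_S] at this
        have := su.k_le
        have := su.five_le
        omega
      · obtain ⟨v, hv, hvS, hp⟩ := st.exists_inner_frontier hT
        obtain ⟨st', hg', hs⟩ := hpure v hvS hp
        refine ⟨st', ⟨hg', hc.step hs (by simpa using fun h => absurd h hv), hs.pure_ne.trans h1,
          hs.mixed_eq.trans h2, hs.mixed_ne.trans h3, hlev' hs, v, hq'.step hs (by simp) ?_⟩,
          by rw [hs.card_S]; simp⟩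
        intro u hu _ _ _ _
        rw [mem_singleton.1 hu]
        simp
  · have := RTree.mem_leafKids.1 hw
    exact RTree.ne_root_of_mem_leaves this.1 (mem_singleton.1 hS)
  · rw [mem_singleton.1 h]; simp

/-- Placement on the other level, starting from mixed edges. -/
lemma Setup.exists_second_phase (su : Setup τ D rt m k) (st₀ : PartialLabeling τ K)
    (hg₀ : Good D rt st₀) (hc₀ : Clean st₀) (hp₀ : #(st₀.edges false true) = 0)
    (hm₀ : #(st₀.edges true false) = 0) (hm₁ : #(st₀.edges true true) = 0) (q₀ : V)
    (hq₀ : Pending st₀ {τ.root, q₀})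
    (hr₀ : 2 * #(rem D st₀) ≤ k + 1) :
    ∃ st : PartialLabeling τ K, (Good D rt st ∧ Clean st ∧
      #(st.edges false false) = #(st₀.edges false false) ∧
      #(st.edges true false) = 0 ∧ #(st.edges true true) ≤ #(st.edges false true) ∧
      ∃ q, Pending st {τ.root, q₀, q} ∧ (q = τ.root ∨ q ∈ st.S ∧ st.lev q = true)) ∧
      (#(rem D st) ≤ #(τ.leafKids τ.root) ∨
        2 * #(rem D st) ≤ #(st.edges false true) + #(st.edges true true)) := by
  have hrem₀ := hg₀.card_rem
  have hcD := su.card_D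
  have := su.k_le
  have := su.le_k
  have := su.five_le
  have := su.leafKids_pos
  refine exists_of_progress _ _ ?_ st₀ ⟨hg₀, hc₀, rfl, hm₀, by omega, τ.root,
    fun w hw hS hp => ?_, Or.inl rfl⟩
  · rintro st ⟨hg, hc, h1, h2, h3, q, hq, hlq⟩
    rw [or_iff_not_imp_left]
    intro hr
    push Not at hr
    have hrem := hg.card_rem
    have hbl := hg.card_blocked_true
    have hpure : ∀ v, v ∉ st.S → τ.par v ∈ st.S → st.lev (τ.par v) = true →
        ∃ st', Good D rt st' ∧ st.Step st' {v} true 1 0 := fun v hv hp hl => by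
      have := hg.exists_pure_step su.two_ne su.D_sub hv hp (by rw [hl]; omega)
      rwa [hl] at this
    by_cases hpend : ∃ w ∈ τ.leaves, w ∉ st.S ∧ τ.par w ∈ st.S ∧ st.lev (τ.par w) = true
    · obtain ⟨w, hw, hwS, hp, hpl⟩ := hpend
      have hpr : τ.par w ≠ τ.root := fun h => by rw [h, hg.lev_root] at hpl; simp at hpl
      obtain ⟨st', hg', hs⟩ := hpure w hwS hp hpl
      refine ⟨st', ⟨hg', hc.step hs (by simpa using fun _ => hpr), hs.pure_ne.trans h1,
        hs.mixed_ne.trans h2, ?_, q, hq.step hs subset_rfl ?_, ?_⟩, by rw [hs.card_S]; simp⟩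
      · rw [hs.mixed_eq, hs.pure_eq]; omega
      · intro u hu x hx hxu
        rw [mem_singleton.1 hu] at hxu
        exact absurd hw (hxu ▸ RTree.par_notMem_leaves (RTree.ne_root_of_mem_leaves hx))
      · exact hlq.imp id fun h => ⟨hs.mem_S.2 (Or.inl h.1), by rw [hs.lev_eq q h.1, h.2]⟩
    · push Not at hpend
      have hq' : Pending st {τ.root, q₀} := fun w hw hS hp => by
        have h := hq w hw hS hp
        have hl := hpend w hw hS hp
        simp only [mem_insert, mem_singleton] at h ⊢
        rcases h with h | h | h
        · exact Or.inl h
        · exact Or.inr h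
        · rcases hlq with hlq | hlq
          · exact Or.inl (h.trans hlq)
          · rw [h] at hl; exact absurd hlq.2 hl
      by_cases hT : ∀ v, v ∉ τ.leaves → v ∈ st.S
      · have := hq'.card_le hT su.leafKids_le
        have h4 : #({τ.root, q₀} : Finset V) ≤ 2 := card_le_two
        have h5 := Nat.mul_le_mul_right #(τ.leafKids τ.root) h4
        rw [su.card_vert, st.card_S] at this
        omega
      · obtain ⟨v, hv, hvS, hp⟩ := st.exists_inner_frontier hT
        by_cases hpl : st.lev (τ.par v) = true
        · obtain ⟨st', hg', hs⟩ := hpure v hvS hp hpl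
          refine ⟨st', ⟨hg', hc.step hs (by simpa using fun h => absurd h hv),
            hs.pure_ne.trans h1, hs.mixed_ne.trans h2, ?_, v,
            hq'.step hs (by intro; simp; tauto) ?_, ?_⟩, by rw [hs.card_S]; simp⟩
          · rw [hs.mixed_eq, hs.pure_eq]; omega
          · intro u hu _ _ _ _
            rw [mem_singleton.1 hu]
            simp
          · exact Or.inr ⟨hs.mem_S.2 (Or.inr (mem_singleton_self v)),
              hs.lev_new v (mem_singleton_self v)⟩
        · have hvr : v ≠ τ.root := fun h => hvS (h ▸ st.root_mem)
          have hstar : ∀ w, τ.par w = v → w ≠ τ.root →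
              ∃ st', Good D rt st' ∧ st.Step st' ({v} ∪ {w}) true 1 1 := fun w hwv hwr => by
            have := hg.exists_star_step su.card_field su.D_sub su.rt_sq hvS hp (l := true)
              (by rw [Bool.not_eq_true] at hpl; rw [hpl]; rfl) {w}
              (by simpa using ⟨hwv, hwr⟩) (by rw [card_singleton]; omega) (by omega) (by omega)
            simpa using this
          have hex : ∃ w, τ.par w = v ∧ w ≠ τ.root ∧ ∃ q', (q' = v ∨ q' = w) ∧
              ∀ x ∈ τ.leaves, x ≠ w → τ.par x = v ∨ τ.par x = w → τ.par x = q' := by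
            by_cases hlk : ∃ w ∈ τ.leaves, τ.par w = v
            · obtain ⟨w, hw, hwv⟩ := hlk
              refine ⟨w, hwv, RTree.ne_root_of_mem_leaves hw, v, Or.inl rfl, ?_⟩
              rintro x hx - (h | h)
              · exact h
              · exact absurd hw (h ▸ RTree.par_notMem_leaves (RTree.ne_root_of_mem_leaves hx))
            · push Not at hlk
              obtain ⟨w, hwr, hwv⟩ := RTree.exists_kid hv hvr
              refine ⟨w, hwv, hwr, w, Or.inr rfl, ?_⟩
              rintro x hx - (h | h)
              · exact absurd h (hlk x hx)
              · exact h
          obtain ⟨w, hwv, hwr, q', hq'vw, hq'x⟩ := hex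
          obtain ⟨st', hg', hs⟩ := hstar w hwv hwr
          refine ⟨st', ⟨hg', hc.step hs ?_, hs.pure_ne.trans h1, hs.mixed_ne.trans h2, ?_, q',
            hq'.step hs (by intro; simp; tauto) ?_, ?_⟩, ?_⟩
          · intro x hx hxl
            rcases mem_union.1 hx with hx | hx
            · rw [mem_singleton.1 hx] at hxl; exact absurd hxl hv
            · rw [mem_singleton.1 hx, hwv]; exact hvr
          · rw [hs.mixed_eq, hs.pure_eq]; omega
          · intro u hu x hx hxu hxN
            simp only [mem_union, mem_singleton, not_or] at hu hxN
            rw [← hxu, hq'x x hx hxN.2 (by rw [hxu]; exact hu)]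
            simp
          · have hmem : q' ∈ ({v} ∪ {w} : Finset V) := by simpa using hq'vw
            exact Or.inr ⟨hs.mem_S.2 (Or.inr hmem), hs.lev_new q' hmem⟩
          · rw [hs.card_S]
            have : 0 < #({v} ∪ {w} : Finset V) := card_pos.2 ⟨v, by simp⟩
            omega
  · have := hq₀ w hw hS hp
    simp only [mem_insert, mem_singleton] at this ⊢
    tauto

end PartialLabeling

namespace PartialLabeling

variable {K V : Type} [Field K] [DecidableEq K] [Fintype V] [DecidableEq V]
  {τ : RTree V} {D : Finset K} {rt : K → K} {st st' : PartialLabeling τ K} [Fintype K] {m k : ℕ}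

/-- A vertex with leaf children is attached by a mixed edge, together with its leaf children. -/
lemma Setup.exists_leaf_star (su : Setup τ D rt m k) (hg : Good D rt st)
    (hr : #(τ.leafKids τ.root) < #(rem D st)) {u : V} (hu : u ∉ st.S) (hp : τ.par u ∈ st.S)
    (hlk : (τ.leafKids u).Nonempty)
    (hB : ∀ l, 3 * #(blocked D rt st l) +
      2 * (#(st.edges true false) + #(st.edges true true)) ≤ 2 * m)
    (hE : #(st.edges true false) + #(st.edges true true) < m) :
    ∃ st' W, Good D rt st' ∧ W ⊆ τ.leafKids u ∧ W.Nonempty ∧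
      st.Step st' ({u} ∪ W) (!st.lev (τ.par u)) #W 1 ∧
      (#(rem D st') ≤ #(τ.leafKids τ.root) ∨ W = τ.leafKids u) := by
  have hle := su.leafKids_le u
  have hpos := card_pos.2 hlk
  obtain ⟨W, hW, hWc⟩ := exists_subset_card_eq (s := τ.leafKids u)
    (n := min #(τ.leafKids u) (#(rem D st) - #(τ.leafKids τ.root))) (min_le_left _ _)
  obtain ⟨st', hg', hs⟩ := hg.exists_star_step su.card_field su.D_sub su.rt_sq hu hp rfl W
    (fun w hw => by
      have := RTree.mem_leafKids.1 (hW hw)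
      exact ⟨this.2, RTree.ne_root_of_mem_leaves this.1⟩) (by omega) (hB _) hE
  refine ⟨st', W, hg', hW, card_pos.1 (by omega), hs, ?_⟩
  rw [or_iff_not_imp_right]
  intro hne
  have hlt : #W < #(τ.leafKids u) := card_lt_card (hW.ssubset_of_ne hne)
  have h1 := hg.card_rem
  have h2 := hg'.card_rem
  have h3 := hs.pure_eq
  have h4 := hs.pure_ne
  cases hl : st.lev (τ.par u) <;> simp only [hl, Bool.not_false, Bool.not_true] at h3 h4 <;> omega

/-- Star placement until the remaining classes can be handled by the leaves at the root. -/
lemma Setup.exists_third_phase (su : Setup τ D rt m k) (st₀ : PartialLabeling τ K)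
    (hg₀ : Good D rt st₀) (hc₀ : Clean st₀) (hp₀ : k ≤ 1 + 2 * #(st₀.edges false false))
    (hm₀ : #(st₀.edges true false) = 0) (hm₁ : #(st₀.edges true true) ≤ #(st₀.edges false true))
    (hr₀ : 2 * #(rem D st₀) ≤ #(st₀.edges false true) + #(st₀.edges true true))
    (Q : Finset V) (hQ : #Q ≤ 3) (hQ₀ : Pending st₀ Q) :
    ∃ st : PartialLabeling τ K, (Good D rt st ∧ Clean st ∧
      #(st₀.edges false false) ≤ #(st.edges false false) ∧
      #(st₀.edges false true) ≤ #(st.edges false true) ∧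
      #(st.edges true false) + #(st₀.edges false false) + #(st₀.edges false true) ≤
        #(st.edges false false) + #(st.edges false true) ∧
      #(st.edges true true) + #(st₀.edges false false) + #(st₀.edges false true) ≤
        #(st₀.edges true true) + #(st.edges false false) + #(st.edges false true) ∧
      (#(rem D st) ≤ #(τ.leafKids τ.root) ∨ Pending st Q)) ∧
      #(rem D st) ≤ #(τ.leafKids τ.root) := by
  have hrem₀ := hg₀.card_rem
  have hcD := su.card_D
  have := su.k_le
  have := su.le_k
  have := su.five_le
  have := su.leafKids_pos
  refine exists_of_progress _ _ ?_ st₀ ⟨hg₀, hc₀, le_rfl, le_rfl, by omega, by omega,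
    Or.inr hQ₀⟩
  rintro st ⟨hg, hc, h1, h2, h3, h4, hpend⟩
  rw [or_iff_not_imp_left]
  intro hr
  rw [not_le] at hr
  replace hpend := hpend.resolve_left (not_le.2 hr)
  have hrem := hg.card_rem
  by_cases hT : ∀ v, v ∉ τ.leaves → v ∈ st.S
  · have := hpend.card_le hT su.leafKids_le
    have h5 := Nat.mul_le_mul_right #(τ.leafKids τ.root) hQ
    rw [su.card_vert, st.card_S] at this
    omega
  obtain ⟨u, hu, huS, hp⟩ := st.exists_inner_frontier hT
  have hur : u ≠ τ.root := fun h => huS (h ▸ st.root_mem)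
  have hB : ∀ l, 3 * #(blocked D rt st l) +
      2 * (#(st.edges true false) + #(st.edges true true)) ≤ 2 * m := fun l => by
    have hb0 := hg.card_blocked_false_le
    have hb1 := hg.card_blocked_true
    cases l <;> omega
  have hE : #(st.edges true false) + #(st.edges true true) < m := by omega
  by_cases hlk : (τ.leafKids u).Nonempty
  · obtain ⟨st', W, hg', hW, hWne, hs, hor⟩ := su.exists_leaf_star hg hr huS hp hlk hB hE
    have hWpos := card_pos.2 hWne
    refine ⟨st', ⟨hg', hc.step hs ?_, ?_⟩, ?_⟩
    · intro x hx hxl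
      rcases mem_union.1 hx with hx | hx
      · rw [mem_singleton.1 hx] at hxl; exact absurd hxl hu
      · rw [(RTree.mem_leafKids.1 (hW hx)).2]; exact hur
    · have e1 := hs.pure_eq
      have e2 := hs.mixed_eq
      have e3 := hs.pure_ne
      have e4 := hs.mixed_ne
      refine and_assoc.1 (and_assoc.1 (and_assoc.1 ⟨?_, hor.imp id ?_⟩))
      · cases hl : st.lev (τ.par u) <;>
          simp only [hl, Bool.not_false, Bool.not_true] at e1 e2 e3 e4 <;> omega
      · rintro rfl
        refine hpend.step hs subset_rfl fun v hv x hx hxv hxN => ?_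
        exfalso
        rcases mem_union.1 hv with hv | hv
        · exact hxN (mem_union_right _ (RTree.mem_leafKids.2 ⟨hx, hxv.trans (mem_singleton.1 hv)⟩))
        · exact RTree.par_notMem_leaves (RTree.ne_root_of_mem_leaves hx)
            (hxv ▸ (RTree.mem_leafKids.1 hv).1)
    · rw [hs.card_S, card_union_of_disjoint, card_singleton]
      · omega
      · rw [disjoint_singleton_left]
        exact fun h => hu (RTree.mem_leafKids.1 (hW h)).1
  rw [not_nonempty_iff_eq_empty] at hlk
  have hnl : ∀ x ∈ τ.leaves, τ.par x ≠ u := fun x hx h =>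
    notMem_empty x (hlk ▸ RTree.mem_leafKids.2 ⟨hx, h⟩)
  by_cases hkid : ∃ w, w ≠ τ.root ∧ τ.par w = u ∧ τ.leafKids w = ∅
  · obtain ⟨w, hwr, hwu, hwl⟩ := hkid
    have hwL : w ∉ τ.leaves := fun h => hnl w h hwu
    have hnlw : ∀ x ∈ τ.leaves, τ.par x ≠ w := fun x hx h =>
      notMem_empty x (hwl ▸ RTree.mem_leafKids.2 ⟨hx, h⟩)
    obtain ⟨st', hg', hs⟩ := hg.exists_star_step su.card_field su.D_sub su.rt_sq huS hp rfl {w}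
      (by simpa using ⟨hwu, hwr⟩) (by rw [card_singleton]; omega) (hB _) hE
    rw [card_singleton] at hs
    refine ⟨st', ⟨hg', hc.step hs ?_, ?_⟩, ?_⟩
    · intro x hx hxl
      simp only [mem_union, mem_singleton] at hx
      rcases hx with rfl | rfl
      · exact absurd hxl hu
      · exact absurd hxl hwL
    · have e1 := hs.pure_eq
      have e2 := hs.mixed_eq
      have e3 := hs.pure_ne
      have e4 := hs.mixed_ne
      refine and_assoc.1 (and_assoc.1 (and_assoc.1 ⟨?_, Or.inr ?_⟩))
      · cases hl : st.lev (τ.par u) <;>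
          simp only [hl, Bool.not_false, Bool.not_true] at e1 e2 e3 e4 <;> omega
      · refine hpend.step hs subset_rfl fun v hv x hx hxv _ => ?_
        simp only [mem_union, mem_singleton] at hv
        rcases hv with rfl | rfl
        · exact absurd hxv (hnl x hx)
        · exact absurd hxv (hnlw x hx)
    · rw [hs.card_S]
      have : 0 < #({u} ∪ {w} : Finset V) := card_pos.2 ⟨u, by simp⟩
      omega
  · push Not at hkid
    obtain ⟨w, hwr, hwu⟩ := RTree.exists_kid hu hur
    have hwL : w ∉ τ.leaves := fun h => hnl w h hwu
    obtain ⟨st₁, hg₁, hs₁⟩ := hg.exists_star_step su.card_field su.D_sub su.rt_sq huS hp rfl ∅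
      (by simp) (by simp) (hB _) hE
    rw [card_empty, union_empty] at hs₁
    have hrem₁ := hg₁.card_rem
    have e1 := hs₁.pure_eq
    have e2 := hs₁.mixed_eq
    have e3 := hs₁.pure_ne
    have e4 := hs₁.mixed_ne
    have hlu := hs₁.lev_new u (mem_singleton_self u)
    have huS₁ : u ∈ st₁.S := hs₁.mem_S.2 (Or.inr (mem_singleton_self u))
    have hwS₁ : w ∉ st₁.S := fun h => by
      rcases hs₁.mem_S.1 h with h | h
      · exact huS (hwu ▸ st.par_mem w h hwr)
      · have := τ.dep_par w hwr
        rw [hwu, mem_singleton.1 h] at this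
        exact lt_irrefl _ this
    have hrr : #(rem D st₁) = #(rem D st) := by
      cases hl : st.lev (τ.par u) <;>
        simp only [hl, Bool.not_false, Bool.not_true] at e1 e2 e3 e4 <;> omega
    have hB₁ : ∀ l, 3 * #(blocked D rt st₁ l) +
        2 * (#(st₁.edges true false) + #(st₁.edges true true)) ≤ 2 * m := fun l => by
      have hb0 := hg₁.card_blocked_false_le
      have hb1 := hg₁.card_blocked_true
      cases hl : st.lev (τ.par u) <;>
        simp only [hl, Bool.not_false, Bool.not_true] at e1 e2 e3 e4 <;> cases l <;> omega
    obtain ⟨st', W, hg', hW, hWne, hs, hor⟩ := su.exists_leaf_star hg₁ (by omega) hwS₁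
      (hwu ▸ huS₁) (hkid w hwr hwu) hB₁ (by
        cases hl : st.lev (τ.par u) <;>
          simp only [hl, Bool.not_false, Bool.not_true] at e1 e2 e3 e4 <;> omega)
    have hWpos := card_pos.2 hWne
    rw [hwu, hlu] at hs
    have hc₁ : Clean st₁ := hc.step hs₁ (by simpa using fun h => absurd h hu)
    refine ⟨st', ⟨hg', hc₁.step hs ?_, ?_⟩, ?_⟩
    · intro x hx hxl
      rcases mem_union.1 hx with hx | hx
      · rw [mem_singleton.1 hx] at hxl; exact absurd hxl hwL
      · rw [(RTree.mem_leafKids.1 (hW hx)).2]; exact hwr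
    · have e1' := hs.pure_eq
      have e2' := hs.mixed_eq
      have e3' := hs.pure_ne
      have e4' := hs.mixed_ne
      refine and_assoc.1 (and_assoc.1 (and_assoc.1 ⟨?_, hor.imp id ?_⟩))
      · cases hl : st.lev (τ.par u) <;>
          simp only [hl, Bool.not_false, Bool.not_true] at e1 e2 e3 e4 e1' e2' e3' e4' <;> omega
      · rintro rfl
        have hpend₁ : Pending st₁ Q := hpend.step hs₁ subset_rfl fun v hv x hx hxv _ => by
          rw [mem_singleton.1 hv] at hxv
          exact absurd hxv (hnl x hx)
        refine hpend₁.step hs subset_rfl fun v hv x hx hxv hxN => ?_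
        exfalso
        rcases mem_union.1 hv with hv | hv
        · exact hxN (mem_union_right _ (RTree.mem_leafKids.2 ⟨hx, hxv.trans (mem_singleton.1 hv)⟩))
        · exact RTree.par_notMem_leaves (RTree.ne_root_of_mem_leaves hx)
            (hxv ▸ (RTree.mem_leafKids.1 hv).1)
    · rw [hs.card_S, hs₁.card_S, card_singleton]
      omega

end PartialLabeling

namespace PartialLabeling

variable {K V : Type} [Field K] [DecidableEq K] [Fintype V] [DecidableEq V]
  {τ : RTree V} {D : Finset K} {rt : K → K} {st st' : PartialLabeling τ K} [Fintype K] {m k : ℕ}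

/-- The three phases combined: the remaining classes can be handled by the leaves at the root, and
few mixed edges have been used. -/
lemma Setup.exists_few_remaining (su : Setup τ D rt m k) :
    ∃ st : PartialLabeling τ K, Good D rt st ∧ Clean st ∧
      #(rem D st) ≤ #(τ.leafKids τ.root) ∧
      2 * #(st.edges true false) ≤ k + 1 ∧ 2 * #(st.edges true true) ≤ k + 1 := by
  obtain ⟨st₁, ⟨hg₁, hc₁, hp₁, hm₁, hm₁', -, q₁, hq₁⟩, h₁⟩ := su.exists_first_phase
  have hcD := su.card_D
  have hrem₁ := hg₁.card_rem
  rcases h₁ with h₁ | h₁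
  · exact ⟨st₁, hg₁, hc₁, h₁, by omega, by omega⟩
  obtain ⟨st₂, ⟨hg₂, hc₂, hp₂, hm₂, hm₂', q₂, hq₂, -⟩, h₂⟩ :=
    su.exists_second_phase st₁ hg₁ hc₁ hp₁ hm₁ hm₁' q₁ hq₁ h₁
  have hrem₂ := hg₂.card_rem
  rcases h₂ with h₂ | h₂
  · exact ⟨st₂, hg₂, hc₂, h₂, by omega, by omega⟩
  obtain ⟨st₃, ⟨hg₃, hc₃, hp₃, hp₃', hm₃, hm₃', -⟩, h₃⟩ :=
    su.exists_third_phase st₂ hg₂ hc₂ (by omega) hm₂ hm₂' h₂ _ card_le_three hq₂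
  have hrem₃ := hg₃.card_rem
  exact ⟨st₃, hg₃, hc₃, h₃, by omega, by omega⟩

/-- There is a partial labeling whose pure edges realise exactly the classes of `D` and which is
well balanced between the two levels. -/
lemma Setup.exists_balanced (su : Setup τ D rt m k) :
    ∃ st : PartialLabeling τ K, st.keys false = D ∧
      ∀ l, 2 * #(st.S.filter fun v => st.lev v = l) ≤ 3 * k + 3 := by
  obtain ⟨st, hg, hc, hr, hm, hm'⟩ := su.exists_few_remaining
  obtain ⟨W, hW, hWc⟩ := exists_subset_card_eq hr
  have hrt0 : ∀ κ ∈ D, rt κ ≠ 0 := fun κ hκ h => by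
    have := su.rt_sq κ hκ
    rw [h, zero_pow two_ne_zero] at this
    exact zero_notMem_of_subset_nzSquares su.D_sub (this ▸ hκ)
  obtain ⟨st', hg', hs, -⟩ := hg.exists_place_kids (zero_notMem_of_subset_nzSquares su.D_sub)
    st.root_mem W (fun w hw => ⟨(RTree.mem_leafKids.1 (hW hw)).2, hc w (hW hw)⟩) (rem D st)
    subset_rfl hWc.le (fun κ hκ => by
      have hκD := (mem_sdiff.1 hκ).1
      refine ⟨st.f τ.root + rt κ, by rw [add_sub_cancel_left, su.rt_sq κ hκD], fun h => ?_,
        fun _ κ' hκ' hne h => hne ?_⟩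
      · obtain ⟨v, hv, hl, hf⟩ := mem_occ.1 h
        by_cases hvr : v = τ.root
        · rw [hvr, left_eq_add] at hf
          exact hrt0 κ hκD hf
        · exact hg.res v hv hvr (hl.trans hg.lev_root) κ hκ hf
      · rw [← su.rt_sq κ hκD, ← su.rt_sq κ' (mem_sdiff.1 hκ').1, add_left_cancel h])
  have h1 := hg.card_rem
  have h2 := hg'.card_rem
  have h3 := su.card_D
  have e1 := hs.pure_eq
  have e2 := hs.mixed_eq
  have e3 := hs.pure_ne
  have e4 := hs.mixed_ne
  simp only [hg.lev_root, Bool.not_false] at e1 e2 e3 e4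
  have hrem : rem D st' = ∅ := card_eq_zero.1 (by omega)
  refine ⟨st', subset_antisymm hg'.keys_sub (sdiff_eq_empty_iff_subset.1 hrem), fun l => ?_⟩
  rw [card_filter_lev, hg'.lev_root]
  cases l <;> simp <;> omega

/-- When all later vertices are inner vertices attached by mixed edges, the levels do not fill up
too quickly. -/
lemma two_mul_card_occ_le (st₀ st : PartialLabeling τ K) (hS : st₀.S ⊆ st.S)
    (hlev : ∀ v ∈ st₀.S, st.lev v = st₀.lev v)
    (hnew : ∀ v ∈ st.S, v ∉ st₀.S → v ∉ τ.leaves ∧ st.lev v = !st.lev (τ.par v)) (l : Bool) :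
    2 * #(st.occ l) ≤ #(st₀.S.filter fun v => st₀.lev v = l) + Fintype.card V := by
  set N := (st.S \ st₀.S).filter fun v => st.lev v = l with hN
  have hNm : ∀ v, v ∈ N ↔ (v ∈ st.S ∧ v ∉ st₀.S) ∧ st.lev v = l := fun v => by
    rw [hN, mem_filter, mem_sdiff]
  have hkid : ∀ v ∈ N, ∃ w, w ≠ τ.root ∧ τ.par w = v := fun v hv => by
    obtain ⟨⟨h1, h2⟩, -⟩ := (hNm v).1 hv
    exact RTree.exists_kid (hnew v h1 h2).1 fun h => h2 (h ▸ st₀.root_mem)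
  choose! c hcr hcp using hkid
  have hinj : #(N.image c) = #N := card_image_of_injOn fun u hu v hv h => by
    rw [← hcp u hu, ← hcp v hv, h]
  have hd1 : Disjoint N (N.image c) := disjoint_right.2 fun w hw hwN => by
    obtain ⟨v, hv, rfl⟩ := mem_image.1 hw
    obtain ⟨⟨h1, h2⟩, h3⟩ := (hNm _).1 hwN
    have h4 := (hnew _ h1 h2).2
    rw [hcp v hv, h3, ((hNm v).1 hv).2] at h4
    cases l <;> simp at h4
  have hsub : N ∪ N.image c ⊆ st₀.Sᶜ := union_subset
    (fun v hv => mem_compl.2 ((hNm v).1 hv).1.2) fun w hw => by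
      obtain ⟨v, hv, rfl⟩ := mem_image.1 hw
      refine mem_compl.2 fun h => ((hNm v).1 hv).1.2 ?_
      have := st₀.par_mem _ h (hcr v hv)
      rwa [hcp v hv] at this
  have h1 := card_le_card hsub
  rw [card_union_of_disjoint hd1, hinj, card_compl] at h1
  have h2 := card_le_univ st₀.S
  have h3 := card_filter_le st₀.S fun v => st₀.lev v = l
  have h4 : st.S.filter (fun v => st.lev v = l) = st₀.S.filter (fun v => st₀.lev v = l) ∪ N := by
    ext v
    rw [mem_union, hNm, mem_filter, mem_filter]
    by_cases hv : v ∈ st₀.S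
    · simp [hv, hS hv, hlev v hv]
    · simp [hv]
  have h5 := card_union_le (st₀.S.filter fun v => st₀.lev v = l) N
  rw [card_occ, h4]
  omega

/-- There is a labeling of the whole tree whose pure edges realise exactly the classes of `D`. -/
lemma Setup.exists_full (su : Setup τ D rt m k) :
    ∃ st : PartialLabeling τ K, st.S = univ ∧ st.keys false = D := by
  obtain ⟨st₀, hD₀, hbal⟩ := su.exists_balanced
  have := su.le_k
  have hV := su.card_vert
  have hK := su.card_field
  have hcD := su.card_D
  obtain ⟨st, ⟨hS, hlev, hnew, hD⟩, hinner⟩ := exists_of_progress (τ := τ) (K := K)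
    (fun st => st₀.S ⊆ st.S ∧ (∀ v ∈ st₀.S, st.lev v = st₀.lev v) ∧
      (∀ v ∈ st.S, v ∉ st₀.S → v ∉ τ.leaves ∧ st.lev v = !st.lev (τ.par v)) ∧ st.keys false = D)
    (fun st => ∀ v, v ∉ τ.leaves → v ∈ st.S)
    (fun st ⟨hS, hlev, hnew, hD⟩ => by
      rw [or_iff_not_imp_left]
      intro hT
      obtain ⟨v, hv, hvS, hp⟩ := st.exists_inner_frontier hT
      have h1 := two_mul_card_occ_le st₀ st hS hlev hnew (!st.lev (τ.par v))
      have h2 := hbal (!st.lev (τ.par v))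
      have h3 := st.card_keys_add
      have h4 : #st.S < Fintype.card V := card_lt_univ_of_notMem hvS
      have h5 := card_union_le {st.f (τ.par v)} (st.occ (!st.lev (τ.par v)))
      rw [card_singleton] at h5
      rw [hD] at h3
      obtain ⟨st', he, hl, -⟩ := st.exists_ext_single v (!st.lev (τ.par v)) hvS hp
        {st.f (τ.par v)} (by simp) (by
          rw [show ((!st.lev (τ.par v)) ^^ st.lev (τ.par v)) = true by simp]; omega)
      refine ⟨st', ⟨hS.trans he.subset, fun w hw => ?_, fun w hw hw₀ => ?_, ?_⟩, ?_⟩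
      · rw [he.lev_eq w (hS hw), hlev w hw]
      · rcases he.mem_S.1 hw with hw | hw
        · have hwr : w ≠ τ.root := fun h => hw₀ (h ▸ st₀.root_mem)
          rw [he.lev_eq w hw, he.lev_eq _ (st.par_mem w hw hwr)]
          exact hnew w hw hw₀
        · rw [mem_singleton.1 hw, hl, he.lev_eq _ hp]
          exact ⟨hv, rfl⟩
      · rw [he.keys_eq, filter_false_of_mem, image_empty, union_empty, hD]
        intro w hw
        rw [he.typ_of_mem hw, mem_singleton.1 hw, hl]
        simp
      · rw [he.card_S, card_singleton]; omega)
    st₀ ⟨subset_rfl, fun _ _ => rfl, fun v hv h => absurd hv h, hD₀⟩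
  have hU : ∀ w ∈ st.Sᶜ, w ∈ τ.leaves := fun w hw => by
    by_contra h
    exact mem_compl.1 hw (hinner w h)
  have hp : ∀ w ∈ st.Sᶜ, τ.par w ∈ st.S := fun w hw =>
    hinner _ (RTree.par_notMem_leaves (RTree.ne_root_of_mem_leaves (hU w hw)))
  have hsq := two_mul_card_nzSquares su.two_ne
  have hkc := st.card_keys_add
  have hcompl := card_add_card_compl st.S
  have hE := card_sdiff_add_card_eq_card (st.keys_subset true)
  rw [hD] at hkc
  obtain ⟨st', he, hl, -⟩ := st.exists_ext_mixed st.Sᶜ (nzSquares K \ st.keys true)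
    (fun w hw => mem_compl.1 hw) hp (zero_notMem_of_subset_nzSquares sdiff_subset)
    sdiff_disjoint (fun w hw => by
      have h1 := two_mul_card_occ_le st₀ st hS hlev hnew (!st.lev (τ.par w))
      have h2 := hbal (!st.lev (τ.par w))
      have h3 := card_sq_sub_mem su.two_ne 0 (nzSquares K \ st.keys true) sdiff_subset
      have h4 : (univ.filter fun z : K => (z - 0) ^ 2 ∈ nzSquares K \ st.keys true) ⊆
          (univ.filter fun x : K => x ^ 2 ∈ nzSquares K \ st.keys true ∧
            x + st.f (τ.par w) ∉ st.occ (!st.lev (τ.par w))) ∪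
          (st.occ (!st.lev (τ.par w))).image fun y => y - st.f (τ.par w) := fun z hz => by
        simp only [sub_zero, mem_filter, mem_univ, true_and] at hz
        by_cases h : z + st.f (τ.par w) ∈ st.occ (!st.lev (τ.par w))
        · exact mem_union_right _ (mem_image.2 ⟨_, h, add_sub_cancel_right _ _⟩)
        · exact mem_union_left _ (mem_filter.2 ⟨mem_univ _, hz, h⟩)
      have h5 := (card_le_card h4).trans (card_union_le _ _)
      have h6 : #((st.occ (!st.lev (τ.par w))).image fun y => y - st.f (τ.par w)) ≤
        #(st.occ (!st.lev (τ.par w))) := card_image_le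
      omega)
  refine ⟨st', by rw [he.S_eq, union_compl], ?_⟩
  rw [he.keys_eq, filter_false_of_mem, image_empty, union_empty, hD]
  intro w hw
  rw [he.typ_of_mem hw, hl w hw]
  simp

/-- Two full labelings with complementary sets of pure and of mixed differences exist. -/
lemma exists_complementary (h2 : (2 : K) ≠ 0) (hK : Fintype.card K = 2 * m + 1)
    (hV : Fintype.card V = m + 1) (hm : 5 ≤ m) (hle : 2 * m ≤ 5 * #τ.leaves)
    (hmax : ∀ v, #(τ.leafKids v) ≤ #(τ.leafKids τ.root))
    (hpos : 1 ≤ #(τ.leafKids τ.root)) :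
    ∃ st : Bool → PartialLabeling τ K, (∀ i, (st i).S = univ) ∧
      ∀ b, (st true).keys b = nzSquares K \ (st false).keys b := by
  obtain ⟨L, hL, hLc⟩ := exists_subset_card_eq (s := τ.leaves) (n := (2 * m + 4) / 5) (by omega)
  obtain ⟨st₁, hS₁, hl₁⟩ := exists_pure hK hV (by omega) L hL hLc
  have hsq := two_mul_card_nzSquares h2
  have hD := card_sdiff_add_card_eq_card (st₁.keys_subset false)
  have hkc₁ := st₁.card_keys_add
  have hLle := card_le_univ L
  have hmix : st₁.keys true = ∅ := eq_empty_of_forall_notMem fun κ hκ => by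
    obtain ⟨v, hv, hr, ht, -⟩ := mem_keys.1 hκ
    rw [typ, hl₁ v hv, hl₁ _ (st₁.par_mem v hv hr)] at ht
    simp at ht
  rw [hmix, card_empty, hS₁, card_compl] at hkc₁
  have hroot : ∀ κ ∈ nzSquares K \ st₁.keys false, ∃ x, x ^ 2 = κ := fun κ hκ => by
    obtain ⟨x, -, hx⟩ := mem_nzSquares.1 (mem_sdiff.1 hκ).1
    exact ⟨x, hx⟩
  choose! rt hrt using hroot
  have su : Setup τ (nzSquares K \ st₁.keys false) rt m ((2 * m + 4) / 5) :=
    ⟨hK, hV, h2, sdiff_subset, by omega, hrt, hmax, hpos, by omega, by omega, hm⟩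
  obtain ⟨st₂, hS₂, hk₂⟩ := su.exists_full
  have hkc₂ := st₂.card_keys_add
  have hcD := su.card_D
  have hE := card_sdiff_add_card_eq_card (st₂.keys_subset true)
  rw [hk₂, hS₂, Finset.card_univ] at hkc₂
  obtain ⟨st₃, hS₃, hp₃, hm₃⟩ := exists_of_pure h2 L hL st₁ hS₁ hl₁
    (nzSquares K \ st₂.keys true) sdiff_subset (by omega)
  refine ⟨fun i => if i then st₃ else st₂, by simp [hS₂, hS₃], ?_⟩
  rintro (_ | _)
  · simp [hp₃, hk₂, inter_eq_right.2 (st₁.keys_subset false)]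
  · simp [hm₃]

/-- A rooted tree with complementary labelings decomposes the complete multipartite graph with
parts of size two. -/
lemma decomposes_of_complementary (h2 : (2 : K) ≠ 0) (T : SimpleGraph V)
    (hT : ∀ e, e ∈ T.edgeSet ↔ ∃ v, v ≠ τ.root ∧ e = s(v, τ.par v))
    (st : Bool → PartialLabeling τ K) (hS : ∀ i, (st i).S = univ)
    (hkeys : ∀ b, (st true).keys b = nzSquares K \ (st false).keys b) :
    Decomposes T (cocktail K) := by
  have hmem : ∀ i v, v ∈ (st i).S := fun i v => by rw [hS]; exact mem_univ v
  refine decomposes_cocktail h2 τ T hT (fun i => (st i).f) (fun i => (st i).lev)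
    (fun i u v h => (st i).inj u (hmem i u) v (hmem i v) (congrArg Prod.fst h)
      (congrArg Prod.snd h)) (fun i v hv => (st i).ne_par v (hmem i v) hv) fun x t hx => ?_
  have hxs : x ^ 2 ∈ nzSquares K := mem_nzSquares.2 ⟨x, hx, rfl⟩
  have hall : ∃ i, x ^ 2 ∈ (st i).keys t := by
    by_cases h : x ^ 2 ∈ (st false).keys t
    · exact ⟨false, h⟩
    · exact ⟨true, by rw [hkeys]; exact mem_sdiff.2 ⟨hxs, h⟩⟩
  have hone : ∀ i j, x ^ 2 ∈ (st i).keys t → x ^ 2 ∈ (st j).keys t → i = j := by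
    have := hkeys t
    rintro (_ | _) (_ | _) hi hj
    · rfl
    · exact absurd hi (mem_sdiff.1 (this ▸ hj)).2
    · exact absurd hj (mem_sdiff.1 (this ▸ hi)).2
    · rfl
  obtain ⟨i, hi⟩ := hall
  obtain ⟨v, hv, hr, ht, hk⟩ := mem_keys.1 hi
  refine ⟨(i, v), ⟨hr, hk, ht⟩, ?_⟩
  rintro ⟨j, w⟩ ⟨hr', hk', ht'⟩
  obtain rfl : j = i := hone j i (mem_keys.2 ⟨w, hmem j w, hr', ht', hk'⟩) hi
  exact Prod.ext rfl ((st j).rainbow w (hmem j w) v hv hr' hr (hk'.trans hk.symm)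
    (ht'.trans ht.symm))

end PartialLabeling

lemma RTree.adj_iff {V : Type} {τ : RTree V} {T : SimpleGraph V}
    (hT : ∀ e, e ∈ T.edgeSet ↔ ∃ v, v ≠ τ.root ∧ e = s(v, τ.par v)) {a b : V} :
    T.Adj a b ↔ a ≠ τ.root ∧ τ.par a = b ∨ b ≠ τ.root ∧ τ.par b = a := by
  rw [← SimpleGraph.mem_edgeSet, hT]
  constructor
  · rintro ⟨v, hv, h⟩
    rcases Sym2.eq_iff.1 h with ⟨rfl, rfl⟩ | ⟨rfl, rfl⟩
    · exact Or.inl ⟨hv, rfl⟩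
    · exact Or.inr ⟨hv, rfl⟩
  · rintro (⟨h, rfl⟩ | ⟨h, rfl⟩)
    · exact ⟨a, h, rfl⟩
    · exact ⟨b, h, Sym2.eq_swap⟩

lemma RTree.mem_leaves_iff {V : Type} [Fintype V] [DecidableEq V] {τ : RTree V}
    {T : SimpleGraph V} (hT : ∀ e, e ∈ T.edgeSet ↔ ∃ v, v ≠ τ.root ∧ e = s(v, τ.par v)) {v : V} :
    v ∈ τ.leaves ↔ v ≠ τ.root ∧ (T.neighborSet v).ncard = 1 := by
  rw [leaves, mem_filter, and_iff_right (mem_univ v)]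
  refine and_congr_right fun hv => ?_
  rw [Set.ncard_eq_one]
  constructor
  · intro hk
    refine ⟨τ.par v, Set.ext fun w => ?_⟩
    rw [SimpleGraph.mem_neighborSet, adj_iff hT, Set.mem_singleton_iff]
    constructor
    · rintro (h | h)
      · exact h.2.symm
      · exact absurd (mem_kids.2 h) (hk ▸ notMem_empty w)
    · exact fun h => Or.inl ⟨hv, h.symm⟩
  · rintro ⟨a, ha⟩
    have hmem : ∀ w, T.Adj v w → w = a := fun w hw => by
      have : w ∈ T.neighborSet v := hw
      rwa [ha] at this
    refine eq_empty_of_forall_notMem fun w hw => ?_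
    obtain ⟨hwr, hwv⟩ := mem_kids.1 hw
    have h1 := hmem w ((adj_iff hT).2 (Or.inr ⟨hwr, hwv⟩))
    have h2 := hmem (τ.par v) ((adj_iff hT).2 (Or.inl ⟨hv, rfl⟩))
    have h3 := τ.dep_par v hv
    have h4 := τ.dep_par w hwr
    rw [hwv, h1] at h4
    rw [h2] at h3
    omega

/-- In a connected graph with at least three vertices, two leaves are not adjacent. -/
lemma SimpleGraph.Connected.ncard_neighborSet_ne_one {V : Type} [Fintype V] {T : SimpleGraph V}
    (hT : T.Connected) (hV : 3 ≤ Fintype.card V) {u w : V} (huw : T.Adj u w)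
    (hw : (T.neighborSet w).ncard = 1) : (T.neighborSet u).ncard ≠ 1 := by
  classical
  intro hu
  obtain ⟨a, ha⟩ := Set.ncard_eq_one.1 hu
  obtain ⟨b, hb⟩ := Set.ncard_eq_one.1 hw
  have hu' : ∀ x, T.Adj u x → x = w := fun x hx => by
    have h1 : x ∈ T.neighborSet u := hx
    have h2 : w ∈ T.neighborSet u := huw
    rw [ha] at h1 h2
    exact h1.trans h2.symm
  have hw' : ∀ x, T.Adj w x → x = u := fun x hx => by
    have h1 : x ∈ T.neighborSet w := hx
    have h2 : u ∈ T.neighborSet w := huw.symm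
    rw [hb] at h1 h2
    exact h1.trans h2.symm
  have hwalk : ∀ x y, T.Walk x y → x = u ∨ x = w → y = u ∨ y = w := fun x y p => by
    induction p with
    | nil => exact id
    | cons h _ ih =>
      rintro (rfl | rfl)
      · exact ih (Or.inr (hu' _ h))
      · exact ih (Or.inl (hw' _ h))
  have hsub : (univ : Finset V) ⊆ {u, w} := fun x _ => by
    obtain ⟨p⟩ := hT.preconnected u x
    simpa using hwalk u x p (Or.inl rfl)
  have := (card_le_card hsub).trans card_le_two
  rw [Finset.card_univ] at this
  omega

/-- A tree can be rooted at a vertex to which the largest number of leaves is attached. -/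
lemma exists_rTree_leafKids_le {V : Type} [Fintype V] [DecidableEq V] (T : SimpleGraph V)
    (hT : T.IsTree) (hV : 3 ≤ Fintype.card V)
    (hleaf : 0 < {v : V | (T.neighborSet v).ncard = 1}.ncard) :
    ∃ τ : RTree V, (∀ e, e ∈ T.edgeSet ↔ ∃ v, v ≠ τ.root ∧ e = s(v, τ.par v)) ∧
      #τ.leaves = {v : V | (T.neighborSet v).ncard = 1}.ncard ∧
      (∀ v, #(τ.leafKids v) ≤ #(τ.leafKids τ.root)) ∧ 1 ≤ #(τ.leafKids τ.root) := by
  classical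
  let a : V → Finset V := fun v => univ.filter fun w => T.Adj v w ∧ (T.neighborSet w).ncard = 1
  have ha : ∀ v w, w ∈ a v ↔ T.Adj v w ∧ (T.neighborSet w).ncard = 1 := fun v w => by simp [a]
  obtain ⟨w₀, hw₀⟩ := (Set.ncard_pos).1 hleaf
  obtain ⟨u₀, hu₀⟩ := Set.ncard_eq_one.1 hw₀
  have hadj₀ : T.Adj w₀ u₀ := by
    have : u₀ ∈ T.neighborSet w₀ := hu₀ ▸ Set.mem_singleton u₀
    exact this
  obtain ⟨g, -, hg⟩ := exists_max_image univ (fun v => #(a v)) ⟨w₀, mem_univ w₀⟩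
  have hgpos : 1 ≤ #(a g) := (card_pos.2 ⟨w₀, (ha _ _).2 ⟨hadj₀.symm, hw₀⟩⟩).trans_le
    (hg u₀ (mem_univ u₀))
  obtain ⟨w, hw⟩ := card_pos.1 hgpos
  have hgl := hT.connected.ncard_neighborSet_ne_one hV ((ha _ _).1 hw).1 ((ha _ _).1 hw).2
  obtain ⟨τ, hτ, hedge⟩ := exists_rTree T hT g
  have hsub : ∀ v, τ.leafKids v ⊆ a v := fun v x hx => by
    obtain ⟨hx, hp⟩ := RTree.mem_leafKids.1 hx
    have := (RTree.mem_leaves_iff hedge).1 hx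
    exact (ha _ _).2 ⟨(RTree.adj_iff hedge).2 (Or.inr ⟨this.1, hp⟩), this.2⟩
  have hroot : τ.leafKids τ.root = a g := by
    rw [← hτ]
    refine subset_antisymm (hsub _) fun x hx => ?_
    obtain ⟨hx1, hx2⟩ := (ha _ _).1 hx
    refine RTree.mem_leafKids.2 ⟨(RTree.mem_leaves_iff hedge).2 ⟨hx1.ne', hx2⟩, ?_⟩
    rcases (RTree.adj_iff hedge).1 hx1 with h | h
    · exact absurd rfl h.1
    · exact h.2
  refine ⟨τ, hedge, ?_, fun v => ?_, hroot ▸ hgpos⟩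
  · rw [← Set.ncard_coe_finset]
    congr 1
    ext v
    rw [mem_coe, RTree.mem_leaves_iff hedge]
    refine ⟨fun h => h.2, fun h => ⟨fun hv => hgl ?_, h⟩⟩
    rw [← hτ, ← hv]
    exact h
  · rw [hroot]
    exact (card_le_card (hsub v)).trans (hg v (mem_univ v))

end Labelings

/-- Let `p = 2m+1 > 10` be a prime. Every tree `T` with `m` edges having at least `2m/5`
leaves decomposes `K_{4m+2} \ M`, the complete graph on `4m+2` vertices minus any perfect
matching `M`. -/
theorem tree_decomposes_complete_minus_perfect_matching
    (p m : ℕ) (hp : p.Prime) (hpm : p = 2 * m + 1) (hp10 : 10 < p)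
    {V : Type} [Fintype V] (T : SimpleGraph V) (hT : T.IsTree)
    (hedges : T.edgeSet.ncard = m)
    (hleaves : 2 * m ≤ 5 * {v : V | (T.neighborSet v).ncard = 1}.ncard)
    (M : (⊤ : SimpleGraph (Fin (4 * m + 2))).Subgraph)
    (hM : M.IsPerfectMatching) :
    Decomposes T ((⊤ : SimpleGraph (Fin (4 * m + 2))) \ M.spanningCoe) := by
  classical
  subst hpm
  have : Fact (2 * m + 1).Prime := ⟨hp⟩
  have hV : Fintype.card V = m + 1 := by
    rw [← hT.card_edgeFinset, ← hedges, ← SimpleGraph.coe_edgeFinset, Set.ncard_coe_finset]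
  have h2 : (2 : ZMod (2 * m + 1)) ≠ 0 := fun h => by
    have h' : ((2 : ℕ) : ZMod (2 * m + 1)) = 0 := by exact_mod_cast h
    have := Nat.le_of_dvd (by omega) ((ZMod.natCast_eq_zero_iff _ _).1 h')
    omega
  obtain ⟨τ, hedge, hcard, hmax, hpos⟩ := exists_rTree_leafKids_le T hT (by omega) (by omega)
  obtain ⟨st, hS, hkeys⟩ := PartialLabeling.exists_complementary (τ := τ) h2 (ZMod.card _) hV
    (by omega) (by rw [hcard]; exact hleaves) hmax hpos
  obtain ⟨φ, hφ⟩ := exists_equiv_of_isPerfectMatching (n := 2 * m + 1) (by ring) M hM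
  refine (PartialLabeling.decomposes_of_complementary h2 T hedge st hS hkeys).congr
    ((Equiv.prodCongr (ZMod.finEquiv (2 * m + 1)).toEquiv.symm (Equiv.refl Bool)).trans φ)
    fun a b => ?_
  rw [SimpleGraph.sdiff_adj, SimpleGraph.top_adj, SimpleGraph.Subgraph.spanningCoe_adj,
    Equiv.trans_apply, Equiv.trans_apply, hφ, φ.injective.ne_iff, Equiv.injective _ |>.ne_iff]
  have hfst : ((Equiv.prodCongr (ZMod.finEquiv (2 * m + 1)).toEquiv.symm (Equiv.refl Bool)) a).1 =
      ((Equiv.prodCongr (ZMod.finEquiv (2 * m + 1)).toEquiv.symm (Equiv.refl Bool)) b).1 ↔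
      a.1 = b.1 := (ZMod.finEquiv (2 * m + 1)).toEquiv.symm.injective.eq_iff
  rw [hfst]
  change _ ↔ a.1 ≠ b.1
  have : a.1 ≠ b.1 → a ≠ b := fun h h' => h (h' ▸ rfl)
  tauto
end

section
/- Let p = 2m+1 > 10 be a prime and let T be a tree with m+1 edges that has a leaf z such that the tree T − z (T with the leaf z and its incident edge deleted) has at least 2m/5 leaves. Then T decomposes K_{6m+5} \ e, the complete graph on 6m+5 vertices minus one edge e. -/
open Finset

/-- An acyclic graph on a nonempty vertex set has at most `n - 1` edges. -/
theorem SimpleGraph.IsAcyclic.card_edgeFinset_lt {W : Type*} [Fintype W] [Nonempty W]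
    {G : SimpleGraph W} [Fintype G.edgeSet] (hG : G.IsAcyclic) :
    #G.edgeFinset < Fintype.card W := by
  classical
  obtain ⟨T, hle, -, hT⟩ :=
    SimpleGraph.connected_top.exists_isTree_le_of_le_of_isAcyclic (le_top : G ≤ ⊤) hG
  have h := hT.card_edgeFinset
  have h' := Finset.card_le_card (SimpleGraph.edgeFinset_mono hle)
  omega

open scoped Classical in
/-- The degree sum of the subgraph of an acyclic graph induced on a nonempty finite set. -/
theorem SimpleGraph.IsAcyclic.sum_card_adj_add_two_le {W : Type*} {G : SimpleGraph W}
    (hG : G.IsAcyclic) {S : Finset W} (hS : S.Nonempty) :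
    ∑ v ∈ S, #{w ∈ S | G.Adj v w} + 2 ≤ 2 * #S := by
  have : Nonempty S := hS.to_subtype
  have hlt := (hG.induce (S : Set W)).card_edgeFinset_lt
  have hdeg := (G.induce (S : Set W)).sum_degrees_eq_twice_card_edges
  have heq : ∑ v ∈ S, #{w ∈ S | G.Adj v w} = ∑ v : (S : Set W), (G.induce (S : Set W)).degree v := by
    rw [← Finset.sum_coe_sort S]
    refine Finset.sum_congr rfl fun v _ => ?_
    rw [← SimpleGraph.card_neighborFinset_eq_degree]
    symm
    refine Finset.card_bij (fun w _ => (w : W)) ?_ ?_ ?_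
    · rintro ⟨w, hw⟩ h
      simpa using ⟨hw, by simpa using h⟩
    · intro a _ b _ h
      exact Subtype.ext h
    · intro w hw
      obtain ⟨h1, h2⟩ := Finset.mem_filter.1 hw
      exact ⟨⟨w, h1⟩, by simpa using h2, rfl⟩
  have hc : Fintype.card (S : Set W) = #S := by simp
  omega

/-- If `n! ≠ 0` in the field, any `n` shifts can be added to `n` distinct elements, in a suitable
order, so that the sums are distinct. -/
theorem exists_perm_injective_add {K : Type*} [Field K] {n : ℕ} (hn : (n.factorial : K) ≠ 0)
    (a b : Fin n → K) (hb : Function.Injective b) :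
    ∃ σ : Equiv.Perm (Fin n), Function.Injective fun i => a i + b (σ i) := by
  by_contra! hcon
  have hzero : ∀ σ : Equiv.Perm (Fin n),
      (Matrix.vandermonde fun i => a i + b (σ i)).det = 0 := fun σ => by
    by_contra h
    exact hcon σ (Matrix.det_vandermonde_ne_zero_iff.1 h)
  have hrow : ∀ τ : Equiv.Perm (Fin n),
      ∑ σ : Equiv.Perm (Fin n), (σ.sign : ℤ) * ∏ i, (a i + b (σ i)) ^ (τ i : ℕ) =
        (τ.sign : ℤ) * (Matrix.vandermonde b).det := fun τ => by
    have hpoly := Matrix.det_eval_matrixOfPolynomials_eq_det_vandermonde b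
      (fun j => (Polynomial.X + Polynomial.C (a (τ.symm j))) ^ (j : ℕ))
      (fun j => by simp) (fun j => (Polynomial.monic_X_add_C _).pow _)
    rw [hpoly, ← Matrix.det_permute' τ, Matrix.det_apply']
    refine Finset.sum_congr rfl fun σ _ => ?_
    simp [add_comm]
  have hsum : ∑ σ : Equiv.Perm (Fin n), ((σ.sign : ℤ) : K) *
      (Matrix.vandermonde fun i => a i + b (σ i)).det = n.factorial * (Matrix.vandermonde b).det := by
    calc _ = ∑ τ : Equiv.Perm (Fin n), ((τ.sign : ℤ) : K) *
          ∑ σ : Equiv.Perm (Fin n), (σ.sign : ℤ) * ∏ i, (a i + b (σ i)) ^ (τ i : ℕ) := by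
          simp_rw [← Matrix.det_transpose (Matrix.vandermonde fun i => _), Matrix.det_apply',
            Finset.mul_sum]
          rw [Finset.sum_comm]
          refine Finset.sum_congr rfl fun τ _ => Finset.sum_congr rfl fun σ _ => ?_
          simp [Matrix.vandermonde_apply, mul_left_comm]
      _ = _ := by
          simp_rw [hrow, ← mul_assoc, ← Int.cast_mul, Int.units_coe_mul_self]
          simp [Fintype.card_perm]
  simp only [hzero, mul_zero, Finset.sum_const_zero] at hsum
  exact mul_ne_zero hn (Matrix.det_vandermonde_ne_zero_iff.2 hb) hsum.symm

/-- Any fewer than `p` elements of `ZMod p` can be shifted by distinct elements of a large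
enough set so that the sums are distinct. -/
theorem ZMod.exists_injective_add {p : ℕ} [Fact p.Prime] {ι : Type*} [Fintype ι]
    (hι : Fintype.card ι < p) (a : ι → ZMod p) (B : Finset (ZMod p)) (hB : Fintype.card ι ≤ #B) :
    ∃ b : ι → ZMod p, (∀ i, b i ∈ B) ∧ Function.Injective b ∧
      Function.Injective fun i => a i + b i := by
  obtain ⟨C, hCB, hC⟩ := Finset.exists_subset_card_eq hB
  let e := Fintype.equivFin ι
  let c := C.equivFinOfCardEq hC
  obtain ⟨σ, hσ⟩ := exists_perm_injective_add (K := ZMod p) (n := Fintype.card ι)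
    (by rw [Ne, ZMod.natCast_eq_zero_iff, (Fact.out : p.Prime).dvd_factorial]; omega)
    (fun i => a (e.symm i)) (fun i => (c.symm i : ZMod p))
    (Subtype.val_injective.comp c.symm.injective)
  refine ⟨fun i => c.symm (σ (e i)), fun i => hCB (c.symm _).2, ?_, ?_⟩
  · exact Subtype.val_injective.comp (c.symm.injective.comp (σ.injective.comp e.injective))
  · intro i j h
    apply e.injective
    apply hσ
    simpa using h

open scoped Classical in
/-- A forest together with the edges `v — h v` of a self-map can be properly coloured with
four colours. -/
theorem SimpleGraph.IsAcyclic.exists_four_coloring {W : Type*} {G : SimpleGraph W}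
    (hG : G.IsAcyclic) (h : W → W) (S : Finset W) :
    ∃ col : W → Fin 4, ∀ u ∈ S, ∀ v ∈ S,
      (G.Adj u v → col u ≠ col v) ∧ (h u = v → u ≠ v → col u ≠ col v) := by
  induction hk : #S generalizing S with
  | zero => exact ⟨fun _ => 0, by simp [Finset.card_eq_zero.1 hk]⟩
  | succ k ih =>
    have hS : S.Nonempty := Finset.card_pos.1 (by omega)
    have hlow : ∃ v ∈ S, #{w ∈ S | G.Adj v w} + #{w ∈ S | h v = w} + #{w ∈ S | h w = v} < 4 := by
      apply Finset.exists_lt_of_sum_lt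
      have h1 := hG.sum_card_adj_add_two_le hS
      have h2 : ∑ v ∈ S, #{w ∈ S | h v = w} ≤ #S := by
        refine (Finset.sum_le_card_nsmul S _ 1 fun v _ => Finset.card_le_one.2 ?_).trans (by simp)
        simp +contextual
      have h3 : ∑ v ∈ S, #{w ∈ S | h w = v} ≤ #S := by
        refine (Finset.sum_card_bipartiteAbove_eq_sum_card_bipartiteBelow
          (s := S) (t := S) fun v w => h w = v).trans_le ?_
        refine (Finset.sum_le_card_nsmul S _ 1 fun v _ => Finset.card_le_one.2 ?_).trans (by simp)
        simp +contextual [Finset.bipartiteBelow]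
      simp only [Finset.sum_add_distrib, Finset.sum_const, smul_eq_mul]
      omega
    obtain ⟨v, hv, hdeg⟩ := hlow
    obtain ⟨col, hcol⟩ := ih (S.erase v) (by rw [Finset.card_erase_of_mem hv]; omega)
    let N := {w ∈ S | G.Adj v w} ∪ {w ∈ S | h v = w} ∪ {w ∈ S | h w = v}
    have hN : #(N.image col) < 4 := by
      refine Finset.card_image_le.trans_lt (lt_of_le_of_lt ?_ hdeg)
      exact (Finset.card_union_le _ _).trans (Nat.add_le_add_right (Finset.card_union_le _ _) _)
    obtain ⟨c, hc⟩ : ∃ c, c ∉ N.image col := by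
      by_contra! hall
      rw [Finset.eq_univ_iff_forall.2 hall] at hN
      simp at hN
    have hcN : ∀ w ∈ N, c ≠ col w := fun w hw h' => hc (Finset.mem_image.2 ⟨w, hw, h'.symm⟩)
    refine ⟨Function.update col v c, fun x hx y hy => ?_⟩
    by_cases hxv : x = v <;> by_cases hyv : y = v
    · subst hxv; subst hyv; simp
    · subst hxv
      rw [Function.update_self, Function.update_of_ne hyv]
      exact ⟨fun h' => hcN y (by simp [N, hy, h']), fun h' _ => hcN y (by simp [N, hy, h'])⟩
    · subst hyv
      rw [Function.update_self, Function.update_of_ne hxv]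
      exact ⟨fun h' => (hcN x (by simp [N, hx, h'.symm])).symm,
        fun h' _ => (hcN x (by simp [N, hx, h'])).symm⟩
    · rw [Function.update_of_ne hxv, Function.update_of_ne hyv]
      exact hcol x (Finset.mem_erase.2 ⟨hxv, hx⟩) y (Finset.mem_erase.2 ⟨hyv, hy⟩)

open scoped Classical in
/-- A small forest embeds into `ZMod p` with distinct differences along distinct darts. -/
theorem SimpleGraph.IsAcyclic.exists_rainbow_labelling {p : ℕ} [Fact p.Prime] (hp2 : p ≠ 2)
    {W : Type*} {G : SimpleGraph W} (hG : G.IsAcyclic) (S : Finset W) (hS : 3 * #S ≤ p + 3) :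
    ∃ f : W → ZMod p, Set.InjOn f S ∧
      ∀ u ∈ S, ∀ v ∈ S, ∀ u' ∈ S, ∀ v' ∈ S, G.Adj u v → G.Adj u' v' →
        f u - f v = f u' - f v' → u = u' ∧ v = v' := by
  have hp : p.Prime := Fact.out
  have htwo : (2 : ZMod p) ≠ 0 := by
    have : ((2 : ℕ) : ZMod p) ≠ 0 := by
      rw [Ne, ZMod.natCast_eq_zero_iff, Nat.prime_dvd_prime_iff_eq hp Nat.prime_two]
      exact hp2
    exact_mod_cast this
  induction hk : #S generalizing S with
  | zero => exact ⟨fun _ => 0, by simp [Finset.card_eq_zero.1 hk]⟩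
  | succ k ih =>
    have hSne : S.Nonempty := Finset.card_pos.1 (by omega)
    obtain ⟨v, hv, hdeg⟩ : ∃ v ∈ S, #{w ∈ S | G.Adj v w} < 2 := by
      apply Finset.exists_lt_of_sum_lt
      have := hG.sum_card_adj_add_two_le hSne
      simp only [Finset.sum_const, smul_eq_mul]
      omega
    have hcard : #(S.erase v) = k := by rw [Finset.card_erase_of_mem hv]; omega
    obtain ⟨f, hinj, hf⟩ := ih (S.erase v) (by omega) hcard
    let darts := (S.erase v).sigma fun u => {w ∈ S.erase v | G.Adj u w}
    let D : Finset (ZMod p) := darts.image fun d => f d.1 - f d.2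
    have hmemD : ∀ u ∈ S.erase v, ∀ w ∈ S.erase v, G.Adj u w → f u - f w ∈ D :=
      fun u hu w hw h => Finset.mem_image.2
        ⟨⟨u, w⟩, Finset.mem_sigma.2 ⟨hu, Finset.mem_filter.2 ⟨hw, h⟩⟩, rfl⟩
    let bad := (S.erase v).image f ∪
      ({w ∈ S | G.Adj v w} ×ˢ D).image fun q => f q.1 + q.2
    have hbad : #bad < p := by
      have h1 : #bad ≤ k + #{w ∈ S | G.Adj v w} * #D := by
        refine (Finset.card_union_le _ _).trans (Nat.add_le_add ?_ ?_)
        · exact Finset.card_image_le.trans hcard.le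
        · exact Finset.card_image_le.trans (Finset.card_product _ _).le
      have h2 : #{w ∈ S | G.Adj v w} * #D ≤ 1 * #D := Nat.mul_le_mul_right _ (by omega)
      have h3 : #D ≤ ∑ u ∈ S.erase v, #{w ∈ S.erase v | G.Adj u w} :=
        Finset.card_image_le.trans (Finset.card_sigma _ _).le
      rcases (S.erase v).eq_empty_or_nonempty with h0 | h0
      · rw [h0, Finset.sum_empty] at h3
        rw [h0, Finset.card_empty] at hcard
        have := hp.pos
        omega
      · have := hG.sum_card_adj_add_two_le h0
        omega
    obtain ⟨x, hx⟩ : ∃ x, x ∉ bad := by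
      by_contra! hall
      rw [Finset.eq_univ_iff_forall.2 hall, Finset.card_univ, ZMod.card] at hbad
      exact hbad.false
    have hxf : ∀ w ∈ S.erase v, x ≠ f w := fun w hw h =>
      hx (Finset.mem_union_left _ (Finset.mem_image.2 ⟨w, hw, h.symm⟩))
    have hxD : ∀ w ∈ S.erase v, G.Adj v w → x - f w ∉ D := fun w hw hvw h =>
      hx (Finset.mem_union_right _ (Finset.mem_image.2
        ⟨(w, x - f w), by simp [hvw, Finset.mem_of_mem_erase hw, h], by simp⟩))
    have huniq : ∀ w ∈ S.erase v, ∀ w' ∈ S.erase v, G.Adj v w → G.Adj v w' → w = w' :=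
      fun w hw w' hw' h h' => Finset.card_le_one.1 (Nat.le_of_lt_succ hdeg) _
        (Finset.mem_filter.2 ⟨Finset.mem_of_mem_erase hw, h⟩) _
        (Finset.mem_filter.2 ⟨Finset.mem_of_mem_erase hw', h'⟩)
    have hsplit : ∀ w ∈ S, w = v ∨ w ∈ S.erase v ∧ w ≠ v := fun w hw => by
      by_cases h : w = v
      · exact Or.inl h
      · exact Or.inr ⟨Finset.mem_erase.2 ⟨h, hw⟩, h⟩
    refine ⟨Function.update f v x, ?_, ?_⟩
    · intro a ha b hb hab
      rcases hsplit a ha with rfl | ⟨ha', hav⟩ <;> rcases hsplit b hb with rfl | ⟨hb', hbv⟩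
      · rfl
      · rw [Function.update_self, Function.update_of_ne hbv] at hab
        exact (hxf b hb' hab).elim
      · rw [Function.update_self, Function.update_of_ne hav] at hab
        exact (hxf a ha' hab.symm).elim
      · rw [Function.update_of_ne hav, Function.update_of_ne hbv] at hab
        exact hinj ha' hb' hab
    · intro a ha b hb a' ha' b' hb' hab hab' heq
      rcases hsplit a ha with rfl | ⟨hae, hav⟩ <;> rcases hsplit b hb with rfl | ⟨hbe, hbv⟩ <;>
      rcases hsplit a' ha' with rfl | ⟨hae', hav'⟩ <;>
      rcases hsplit b' hb' with rfl | ⟨hbe', hbv'⟩ <;>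
      simp only [Function.update_self, Function.update_of_ne, ne_eq, SimpleGraph.irrefl, *,
        not_false_eq_true] at heq hab hab'
      · exact ⟨rfl, huniq _ hbe _ hbe' hab hab'⟩
      · exfalso
        have := huniq _ hbe _ hae' hab hab'.symm
        subst this
        apply hxf b hbe
        have h2 : (2 : ZMod p) * (x - f b) = 0 := by linear_combination heq
        exact sub_eq_zero.1 ((mul_eq_zero.1 h2).resolve_left htwo)
      · exact (hxD b hbe hab (heq ▸ hmemD _ hae' _ hbe' hab')).elim
      · exfalso
        have := huniq _ hae _ hbe' hab.symm hab'
        subst this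
        apply hxf a hae
        have h2 : (2 : ZMod p) * (x - f a) = 0 := by linear_combination -heq
        exact sub_eq_zero.1 ((mul_eq_zero.1 h2).resolve_left htwo)
      · exact ⟨huniq _ hae _ hae' hab.symm hab'.symm, rfl⟩
      · refine (hxD a hae hab.symm ?_).elim
        have : x - f a = f b' - f a' := by linear_combination -heq
        exact this ▸ hmemD _ hbe' _ hae' hab'.symm
      · exact (hxD b' hbe' hab' (heq ▸ hmemD _ hae _ hbe hab)).elim
      · refine (hxD a' hae' hab'.symm ?_).elim
        have : x - f a' = f b - f a := by linear_combination heq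
        exact this ▸ hmemD _ hbe _ hae hab.symm
      · exact hf a hae b hbe a' hae' b' hbe' hab hab' heq

/-- Outside a small symmetric set there are many residues, no two of which are opposite. -/
theorem ZMod.exists_half_set {p m L : ℕ} [NeZero p] (hpm : p = 2 * m + 1) (D : Finset (ZMod p))
    (hD : ∀ x ∈ D, -x ∈ D) (hL : #D + 2 * L ≤ 2 * m) :
    ∃ B : Finset (ZMod p), L ≤ #B ∧ (∀ x ∈ B, x ∉ D) ∧ ∀ x ∈ B, ∀ y ∈ B, x ≠ -y := by
  classical
  let C : Finset (ZMod p) := (insert 0 D)ᶜ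
  have hC : p ≤ #C + (#D + 1) := by
    have h1 := Finset.card_compl (insert 0 D)
    have h2 := Finset.card_insert_le 0 D
    rw [ZMod.card] at h1
    change #C = _ at h1
    omega
  have hmemC : ∀ x, x ∈ C ↔ x ≠ 0 ∧ x ∉ D := fun x => by simp [C]
  have hneg : ∀ x ∈ C, -x ∈ C := fun x hx => by
    rw [hmemC] at hx ⊢
    exact ⟨neg_ne_zero.2 hx.1, fun h => hx.2 (by simpa using hD _ h)⟩
  have hvalneg : ∀ x ∈ C, (-x).val = p - x.val := fun x hx => by
    have := ((hmemC x).1 hx).1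
    rw [ZMod.neg_val, if_neg this]
  have hsplit := Finset.card_filter_add_card_filter_not (s := C) (fun x => x.val ≤ m)
  have hle : #{x ∈ C | ¬ x.val ≤ m} ≤ #{x ∈ C | x.val ≤ m} := by
    refine Finset.card_le_card_of_injOn (fun x => -x) ?_ neg_injective.injOn
    intro x hx
    simp only [Finset.coe_filter, Set.mem_ofPred_eq] at hx ⊢
    refine ⟨hneg x hx.1, ?_⟩
    rw [hvalneg x hx.1]
    omega
  refine ⟨{x ∈ C | x.val ≤ m}, by omega, fun x hx => ?_, fun x hx y hy hxy => ?_⟩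
  · exact ((hmemC x).1 (Finset.mem_filter.1 hx).1).2
  · rw [Finset.mem_filter] at hx hy
    have h := hvalneg y hy.1
    rw [← hxy] at h
    have := ZMod.val_lt y
    omega

/-- In a connected graph with at least three vertices no two leaves are adjacent. -/
theorem SimpleGraph.Connected.not_adj_of_leaves {W : Type*} [Fintype W] {G : SimpleGraph W}
    (hG : G.Connected) (hcard : 3 ≤ Fintype.card W) {u v : W}
    (hu : (G.neighborSet u).ncard = 1) (hv : (G.neighborSet v).ncard = 1) : ¬ G.Adj u v := by
  classical
  intro huv
  have nbr : ∀ x y, (G.neighborSet x).ncard = 1 → G.Adj x y → ∀ w, G.Adj x w → w = y := by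
    intro x y hx hxy w hw
    obtain ⟨t, ht⟩ := Set.ncard_eq_one.1 hx
    have h1 : y ∈ G.neighborSet x := hxy
    have h2 : w ∈ G.neighborSet x := hw
    rw [ht] at h1 h2
    exact h2.trans h1.symm
  have hall : ∀ w, w = u ∨ w = v := by
    intro w
    have hr := (SimpleGraph.reachable_iff_reflTransGen u w).1 (hG.preconnected u w)
    induction hr with
    | refl => exact Or.inl rfl
    | tail _ hadj ih =>
      rcases ih with rfl | rfl
      · exact Or.inr (nbr _ _ hu huv _ hadj)
      · exact Or.inl (nbr _ _ hv huv.symm _ hadj)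
  have : Fintype.card W ≤ #({u, v} : Finset W) :=
    Finset.card_le_card fun w _ => by simpa using hall w
  have := Finset.card_le_two (a := u) (b := v)
  omega

/-- A tree with `m` edges and at least `2m/5` leaves has a labelling by `ZMod (2m+1)` with
distinct differences along distinct darts, at most two vertices sharing a label (told apart by
`c`), and a proper 4-colouring that is constant on vertices with the same label. -/
theorem SimpleGraph.IsTree.exists_labelling {p m : ℕ} [Fact p.Prime] (hpm : p = 2 * m + 1)
    (hm : 2 ≤ m) {W : Type*} [Fintype W] {G : SimpleGraph W} (hG : G.IsTree)
    (hcard : Fintype.card W = m + 1)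
    (hleaves : 2 * m ≤ 5 * {v | (G.neighborSet v).ncard = 1}.ncard) :
    ∃ (f : W → ZMod p) (col : W → Fin 4) (c : W → ZMod 3), (∀ v, c v ≠ 2) ∧
      (∀ u v u' v', G.Adj u v → G.Adj u' v' → f u - f v = f u' - f v' → u = u' ∧ v = v') ∧
      (∀ u v, G.Adj u v → col u ≠ col v) ∧
      (∀ u v, u ≠ v → f u = f v → col u = col v ∧ c u ≠ c v) := by
  classical
  let leaf : W → Prop := fun v => (G.neighborSet v).ncard = 1
  let Λ : Finset W := {v | leaf v}
  let S : Finset W := {v | ¬ leaf v}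
  have hmemS : ∀ v, v ∈ S ↔ ¬ leaf v := fun v => by simp [S]
  have hΛ : 2 * m ≤ 5 * #Λ := by
    convert hleaves
    rw [← Set.ncard_coe_finset]
    congr
    ext v
    simp [Λ, leaf]
  have hΛS : #Λ + #S = m + 1 := by
    rw [← hcard]
    exact Finset.card_filter_add_card_filter_not leaf
  have hpar : ∀ v, ∃ w, leaf v → ∀ x, G.Adj v x ↔ x = w := fun v => by
    by_cases h : leaf v
    · obtain ⟨w, hw⟩ := Set.ncard_eq_one.1 h
      exact ⟨w, fun _ x => by rw [← SimpleGraph.mem_neighborSet, hw, Set.mem_singleton_iff]⟩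
    · exact ⟨v, fun h' => (h h').elim⟩
  choose par hpar using hpar
  have hadjpar : ∀ v, leaf v → G.Adj v (par v) := fun v h => (hpar v h _).2 rfl
  have hnotleaf : ∀ u v, leaf u → G.Adj u v → ¬ leaf v := fun u v hu huv hv =>
    hG.connected.not_adj_of_leaves (by omega) hu hv huv
  have hparS : ∀ v, leaf v → ¬ leaf (par v) := fun v h => hnotleaf _ _ h (hadjpar v h)
  have hSne : S.Nonempty := by
    obtain ⟨v, hv⟩ : Λ.Nonempty := Finset.card_pos.1 (by omega)
    exact ⟨par v, (hmemS _).2 (hparS v (by simpa [Λ] using hv))⟩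
  obtain ⟨f₀, hinj, hrain⟩ :=
    hG.isAcyclic.exists_rainbow_labelling (p := p) (by omega) S (by omega)
  let D : Finset (ZMod p) :=
    (S.sigma fun u => {w ∈ S | G.Adj u w}).image fun d => f₀ d.1 - f₀ d.2
  have hmemD : ∀ u w, ¬ leaf u → ¬ leaf w → G.Adj u w → f₀ u - f₀ w ∈ D := fun u w hu hw h =>
    Finset.mem_image.2 ⟨⟨u, w⟩, by simp [hmemS, hu, hw, h], rfl⟩
  have hDneg : ∀ x ∈ D, -x ∈ D := fun x hx => by
    obtain ⟨⟨u, w⟩, huw, rfl⟩ := Finset.mem_image.1 hx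
    simp only [Finset.mem_sigma, Finset.mem_filter, hmemS] at huw
    rw [neg_sub]
    exact hmemD _ _ huw.2.1 huw.1 huw.2.2.symm
  have hDcard : #D + 2 ≤ 2 * #S :=
    (Nat.add_le_add_right (Finset.card_image_le.trans (Finset.card_sigma _ _).le) 2).trans
      (hG.isAcyclic.sum_card_adj_add_two_le hSne)
  obtain ⟨B, hB, hBD, hBneg⟩ :=
    ZMod.exists_half_set (L := #Λ) hpm D hDneg (by omega)
  obtain ⟨b, hbB, hbinj, hsuminj⟩ := ZMod.exists_injective_add (p := p) (ι := {v // leaf v})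
    (by rw [Fintype.card_subtype]; change #Λ < p; omega) (fun v => f₀ (par v)) B
    (by rw [Fintype.card_subtype]; exact hB)
  let f : W → ZMod p := fun v => if h : leaf v then f₀ (par v) + b ⟨v, h⟩ else f₀ v
  have hfleaf : ∀ v (h : leaf v), f v = f₀ (par v) + b ⟨v, h⟩ := fun v h => dif_pos h
  have hfbase : ∀ v, ¬ leaf v → f v = f₀ v := fun v h => dif_neg h
  have hfpar : ∀ v (h : leaf v), f v - f (par v) = b ⟨v, h⟩ := fun v h => by
    rw [hfleaf v h, hfbase _ (hparS v h)]; ring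
  have hfinjbase : ∀ u v, ¬ leaf u → ¬ leaf v → f u = f v → u = v := fun u v hu hv h => by
    rw [hfbase u hu, hfbase v hv] at h
    exact hinj ((hmemS u).2 hu) ((hmemS v).2 hv) h
  have hfinjleaf : ∀ u v, leaf u → leaf v → f u = f v → u = v := fun u v hu hv h => by
    rw [hfleaf u hu, hfleaf v hv] at h
    exact congrArg Subtype.val (hsuminj (a₁ := ⟨u, hu⟩) (a₂ := ⟨v, hv⟩) h)
  have hfrain : ∀ u v u' v', G.Adj u v → G.Adj u' v' → f u - f v = f u' - f v' →
      u = u' ∧ v = v' := by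
    have hbD : ∀ i, b i ∉ D := fun i => hBD _ (hbB i)
    have hbD' : ∀ i, -b i ∉ D := fun i h => hbD i (by simpa using hDneg _ h)
    have hbb : ∀ i j, b i ≠ -b j := fun i j => hBneg _ (hbB i) _ (hbB j)
    have hdart : ∀ u v, G.Adj u v → (f u - f v ∈ D ∧ ¬ leaf u ∧ ¬ leaf v) ∨
        (∃ h : leaf u, v = par u ∧ f u - f v = b ⟨u, h⟩) ∨
        (∃ h : leaf v, u = par v ∧ f u - f v = -b ⟨v, h⟩) := by
      intro u v huv
      by_cases hu : leaf u
      · have hv := (hpar u hu v).1 huv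
        exact Or.inr (Or.inl ⟨hu, hv, by rw [hv, hfpar u hu]⟩)
      · by_cases hv : leaf v
        · have hu' := (hpar v hv u).1 huv.symm
          exact Or.inr (Or.inr ⟨hv, hu', by rw [hu', ← hfpar v hv, neg_sub]⟩)
        · refine Or.inl ⟨?_, hu, hv⟩
          rw [hfbase u hu, hfbase v hv]
          exact hmemD u v hu hv huv
    intro u v u' v' huv huv' heq
    rcases hdart u v huv with ⟨h, hu, hv⟩ | ⟨hu, hv, h⟩ | ⟨hv, hu, h⟩ <;>
    rcases hdart u' v' huv' with ⟨h', hu', hv'⟩ | ⟨hu', hv', h'⟩ | ⟨hv', hu', h'⟩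
    · rw [hfbase u hu, hfbase v hv, hfbase u' hu', hfbase v' hv'] at heq
      exact hrain u ((hmemS _).2 hu) v ((hmemS _).2 hv) u' ((hmemS _).2 hu') v' ((hmemS _).2 hv')
        huv huv' heq
    · exact (hbD _ (h' ▸ heq ▸ h)).elim
    · exact (hbD' _ (h' ▸ heq ▸ h)).elim
    · exact (hbD _ (h ▸ heq ▸ h')).elim
    · have := congrArg Subtype.val (hbinj (h.symm.trans (heq.trans h')))
      exact ⟨this, by rw [hv, hv']; exact congrArg par this⟩
    · exact (hbb _ _ (h.symm.trans (heq.trans h'))).elim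
    · exact (hbD' _ (h ▸ heq ▸ h')).elim
    · exact (hbb _ _ (h'.symm.trans (heq.symm.trans h))).elim
    · have := congrArg Subtype.val (hbinj (neg_injective (h.symm.trans (heq.trans h'))))
      exact ⟨by rw [hu, hu']; exact congrArg par this, this⟩
  have hfne : ∀ u v, G.Adj u v → f u ≠ f v := fun u v huv h => by
    have := (hfrain u v v u huv huv.symm (by rw [h])).1
    exact huv.ne this
  have hpartner : ∀ w, ∃ x, (∀ v, leaf v → f v = f w → x = par v) := fun w => by
    by_cases h : ∃ v, leaf v ∧ f v = f w
    · obtain ⟨v, hv, hvw⟩ := h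
      exact ⟨par v, fun v' hv' h' => by rw [hfinjleaf v v' hv hv' (hvw.trans h'.symm)]⟩
    · exact ⟨w, fun v hv hvw => (h ⟨v, hv, hvw⟩).elim⟩
  choose partner hpartner using hpartner
  obtain ⟨col₀, hcol₀⟩ := hG.isAcyclic.exists_four_coloring partner S
  have hcolleaf : ∀ v, ∃ k, leaf v →
      k ≠ col₀ (par v) ∧ ∀ w, ¬ leaf w → f w = f v → k = col₀ w := fun v => by
    by_cases hv : leaf v
    · by_cases h : ∃ w, ¬ leaf w ∧ f w = f v
      · obtain ⟨w, hw, hwv⟩ := h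
        refine ⟨col₀ w, fun _ => ⟨?_, fun w' hw' h' => ?_⟩⟩
        · refine (hcol₀ w ((hmemS w).2 hw) (par v) ((hmemS _).2 (hparS v hv))).2
            (hpartner w v hv hwv.symm) ?_
          rintro rfl
          exact hfne _ _ (hadjpar v hv) hwv.symm
        · rw [hfinjbase w w' hw hw' (hwv.trans h'.symm)]
      · obtain ⟨k, hk⟩ := exists_ne (col₀ (par v))
        exact ⟨k, fun _ => ⟨hk, fun w hw hwv => (h ⟨w, hw, hwv⟩).elim⟩⟩
    · exact ⟨0, fun h => (hv h).elim⟩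
  choose colleaf hcolleaf using hcolleaf
  refine ⟨f, fun v => if leaf v then colleaf v else col₀ v, fun v => if leaf v then 1 else 0,
    fun v => ?_, hfrain, fun u v huv => ?_, fun u v huv hfuv => ?_⟩
  · beta_reduce
    split_ifs <;> decide
  · beta_reduce
    by_cases hu : leaf u
    · have hv := hnotleaf u v hu huv
      rw [if_pos hu, if_neg hv, (hpar u hu v).1 huv]
      exact (hcolleaf u hu).1
    · by_cases hv : leaf v
      · rw [if_neg hu, if_pos hv, (hpar v hv u).1 huv.symm]
        exact (hcolleaf v hv).1.symm
      · rw [if_neg hu, if_neg hv]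
        exact (hcol₀ u ((hmemS u).2 hu) v ((hmemS v).2 hv)).1 huv
  · by_cases hu : leaf u <;> by_cases hv : leaf v
    · exact (huv (hfinjleaf u v hu hv hfuv)).elim
    · simp only [if_pos hu, if_neg hv]
      exact ⟨(hcolleaf u hu).2 v hv hfuv.symm, by decide⟩
    · simp only [if_pos hv, if_neg hu]
      exact ⟨((hcolleaf v hv).2 u hu hfuv).symm, by decide⟩
    · exact (huv (hfinjbase u v hu hv hfuv)).elim

/-- Representatives of the four classes of nonzero linear forms on the plane over `ZMod 3`. -/
def planeForm (k : Fin 4) (α : ZMod 3 × ZMod 3) : ZMod 3 :=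
  ![α.1, α.2, α.1 + α.2, α.1 + 2 * α.2] k

theorem planeForm_ext : ∀ {i j : Fin 4}, i ≠ j → ∀ {α β : ZMod 3 × ZMod 3},
    planeForm i α = planeForm i β → planeForm j α = planeForm j β → α = β := by
  decide

/-- Two of the three values of `s` select an extra point, the third one selects `x`. -/
def pendantEnd {X : Type*} (x : X) (s : ZMod 3) : X ⊕ Bool :=
  if s = 0 then Sum.inr false else if s = 1 then Sum.inr true else Sum.inl x

theorem eq_of_pendantEnd_eq_inl {X : Type*} {x q : X} {s : ZMod 3}
    (h : pendantEnd x s = Sum.inl q) : q = x := by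
  unfold pendantEnd at h
  split_ifs at h
  exact (Sum.inl.inj h).symm

theorem eq_of_pendantEnd_eq {X : Type*} {x y : X} {s t : ZMod 3}
    (h : pendantEnd x s = pendantEnd y t) : s = t := by
  have h2 : ∀ s t : ZMod 3, s ≠ 0 → s ≠ 1 → t ≠ 0 → t ≠ 1 → s = t := by decide
  unfold pendantEnd at h
  split_ifs at h
  all_goals first | exact h2 s t ‹_› ‹_› ‹_› ‹_› | simp_all

/-- A family of injective homomorphisms that is injective on edges and has the right size
is a decomposition. -/
theorem Decomposes.of_injective_of_card {α β ι : Type} [Fintype ι] [Finite α] [Finite β]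
    {H : SimpleGraph α} {G : SimpleGraph β} (f : ι → α → β) (hf : ∀ i, Function.Injective (f i))
    (hadj : ∀ i a b, H.Adj a b → G.Adj (f i a) (f i b))
    (hdart : ∀ i j a b c d, H.Adj a b → H.Adj c d → f i a = f j c → f i b = f j d →
      i = j ∧ a = c ∧ b = d)
    (hcard : G.edgeSet.ncard = Fintype.card ι * H.edgeSet.ncard) : Decomposes H G := by
  refine ⟨ι, f, hf, hadj, ?_⟩
  let F : ι × H.edgeSet → G.edgeSet := fun q =>
    ⟨Sym2.map (f q.1) q.2, by
      obtain ⟨i, e, he⟩ := q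
      induction e using Sym2.ind with
      | _ a b => exact hadj i a b he⟩
  have hF : Function.Injective F := by
    rintro ⟨i, e, he⟩ ⟨j, e', he'⟩ h
    have h' : Sym2.map (f i) e = Sym2.map (f j) e' := congrArg Subtype.val h
    clear h
    induction e using Sym2.ind with
    | _ a b =>
      induction e' using Sym2.ind with
      | _ c d =>
        rw [Sym2.map_mk, Sym2.map_mk, Sym2.eq_iff] at h'
        rcases h' with ⟨h1, h2⟩ | ⟨h1, h2⟩
        · obtain ⟨rfl, rfl, rfl⟩ := hdart i j a b c d he he' h1 h2
          rfl
        · obtain ⟨rfl, rfl, rfl⟩ := hdart i j a b d c he (SimpleGraph.Adj.symm he') h1 h2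
          simp [Sym2.eq_swap]
  have hbij : Function.Bijective F := by
    rw [Nat.bijective_iff_injective_and_card]
    refine ⟨hF, ?_⟩
    rw [Nat.card_prod, Nat.card_eq_fintype_card, Nat.card_coe_set_eq, Nat.card_coe_set_eq, hcard]
  intro e he
  obtain ⟨⟨i, e₀⟩, hq⟩ := hbij.2 ⟨e, he⟩
  refine ⟨(i, e₀), ⟨e₀.2, congrArg Subtype.val hq⟩, ?_⟩
  rintro ⟨j, e'⟩ ⟨he', heq⟩
  have : (⟨j, e', he'⟩ : ι × H.edgeSet) = (i, e₀) := hF (hq ▸ Subtype.ext heq)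
  exact congrArg (fun q : ι × H.edgeSet => (q.1, (q.2 : Sym2 α))) this

/-- An equivalence can be modified to take prescribed values at two points. -/
theorem Equiv.exists_apply_eq_apply_eq {α β : Type*} (e : α ≃ β) {x y : α} (hxy : x ≠ y)
    {a b : β} (hab : a ≠ b) : ∃ φ : α ≃ β, φ x = a ∧ φ y = b := by
  classical
  let e' := e.trans (Equiv.swap (e x) a)
  have hx : e' x = a := by simp [e']
  refine ⟨e'.trans (Equiv.swap (e' y) b), ?_, by simp⟩
  rw [Equiv.trans_apply, hx, Equiv.swap_apply_of_ne_of_ne _ hab]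
  rw [← hx]
  exact e'.injective.ne hxy

theorem card_edgeSet_top_deleteEdges {n : ℕ} {a b : Fin n} (hab : a ≠ b) :
    ((⊤ : SimpleGraph (Fin n)).deleteEdges {s(a, b)}).edgeSet.ncard + 1 = n.choose 2 := by
  rw [SimpleGraph.edgeSet_deleteEdges, Set.ncard_sdiff_singleton_add_one (by simpa using hab)
    (Set.toFinite _), ← SimpleGraph.coe_edgeFinset, Set.ncard_coe_finset,
    SimpleGraph.card_edgeFinset_top_eq_card_choose_two, Fintype.card_fin]

/-- From a labelling of `T - z` as provided by `SimpleGraph.IsTree.exists_labelling`, the `9p`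
copies of `T` on the vertex set `ZMod p × ZMod 3` with two extra points: translates of the labels
of `T - z`, spread over the fibres by linear forms, with the pendant edge at `z` added. -/
theorem SimpleGraph.exists_copies {p : ℕ} {V : Type*} {T : SimpleGraph V} {z : V}
    (hz : (T.neighborSet z).ncard = 1)
    {f : {w : V | w ≠ z} → ZMod p} {col : {w : V | w ≠ z} → Fin 4} {c : {w : V | w ≠ z} → ZMod 3}
    (hc : ∀ v, c v ≠ 2)
    (hrain : ∀ u v u' v', (T.induce {w : V | w ≠ z}).Adj u v →
      (T.induce {w : V | w ≠ z}).Adj u' v' → f u - f v = f u' - f v' → u = u' ∧ v = v')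
    (hcol : ∀ u v, (T.induce {w : V | w ≠ z}).Adj u v → col u ≠ col v)
    (hsame : ∀ u v, u ≠ v → f u = f v → col u = col v ∧ c u ≠ c v) :
    ∃ F : ZMod p × (ZMod 3 × ZMod 3) → V → ZMod p × ZMod 3 ⊕ Bool,
      (∀ i, Function.Injective (F i)) ∧
      (∀ i j u v u' v', T.Adj u v → T.Adj u' v' → F i u = F j u' → F i v = F j v' →
        i = j ∧ u = u' ∧ v = v') ∧
      ∀ i u v, T.Adj u v → ∀ t, F i u = Sum.inr t → ∀ t', F i v ≠ Sum.inr t' := by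
  classical
  have hfne : ∀ u v, (T.induce {w : V | w ≠ z}).Adj u v → f u ≠ f v := fun u v huv h =>
    hcol u v huv (hsame u v huv.ne h).1
  obtain ⟨y₀, hy₀⟩ := Set.ncard_eq_one.1 hz
  have hy : ∀ x, T.Adj z x ↔ x = y₀ := fun x => by
    rw [← SimpleGraph.mem_neighborSet, hy₀, Set.mem_singleton_iff]
  have hy₀z : y₀ ≠ z := fun h => T.irrefl (h ▸ (hy y₀).2 rfl)
  let y : {w : V | w ≠ z} := ⟨y₀, hy₀z⟩
  obtain ⟨k, hk⟩ := exists_ne (col y)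
  let pt : {w : V | w ≠ z} → ZMod p × (ZMod 3 × ZMod 3) → ZMod p × ZMod 3 := fun v i =>
    (f v + i.1, planeForm (col v) i.2 + c v)
  let pend : ZMod p × (ZMod 3 × ZMod 3) → ZMod p × ZMod 3 ⊕ Bool := fun i =>
    pendantEnd (f y + i.1, planeForm (col y) i.2 + 2) (planeForm k i.2)
  let F : ZMod p × (ZMod 3 × ZMod 3) → V → ZMod p × ZMod 3 ⊕ Bool := fun i v =>
    if h : v = z then pend i else Sum.inl (pt ⟨v, h⟩ i)
  have hFz : ∀ i, F i z = pend i := fun i => dif_pos rfl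
  have hFv : ∀ i v (h : v ≠ z), F i v = Sum.inl (pt ⟨v, h⟩ i) := fun i v h => dif_neg h
  have hpend : ∀ i q, pend i = Sum.inl q → q = (f y + i.1, planeForm (col y) i.2 + 2) :=
    fun i q h => eq_of_pendantEnd_eq_inl h
  have hpt : ∀ i v, f v = f y → pend i ≠ Sum.inl (pt v i) := fun i v hv h => by
    have h' := congrArg Prod.snd (hpend i _ h)
    have hcolv : col v = col y := by
      by_cases hvy : v = y
      · rw [hvy]
      · exact (hsame v y hvy hv).1
    simp only [pt, hcolv, add_right_inj] at h'
    exact hc v h'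
  have hinj : ∀ i, Function.Injective (F i) := by
    have hzv : ∀ i v, v ≠ z → F i z ≠ F i v := fun i v hv h => by
      rw [hFz, hFv i v hv] at h
      refine hpt i ⟨v, hv⟩ ?_ h
      simpa [pt] using congrArg Prod.fst (hpend i _ h)
    intro i u v huv
    by_cases hu : u = z <;> by_cases hv : v = z
    · rw [hu, hv]
    · exact (hzv i v hv (hu ▸ huv)).elim
    · exact (hzv i u hu (hv ▸ huv.symm)).elim
    · by_contra hne
      rw [hFv i u hu, hFv i v hv, Sum.inl.injEq, Prod.mk.injEq] at huv
      obtain ⟨h1, h2⟩ := hsame ⟨u, hu⟩ ⟨v, hv⟩ (by simpa using hne) (add_right_cancel huv.1)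
      rw [h1, add_right_inj] at huv
      exact h2 huv.2
  have hinner : ∀ i j u v w, T.Adj u v → u ≠ z → v ≠ z → F i u = F j z → F i v = F j w →
      T.Adj z w → False := by
    intro i j u v w huv hu hv h1 h2 hw
    rw [(hy w).1 hw, hFv j y₀ hy₀z, hFv i v hv] at h2
    rw [hFz, hFv i u hu] at h1
    have h1' := congrArg Prod.fst (hpend j _ h1.symm)
    have h2' := congrArg Prod.fst (Sum.inl.inj h2)
    exact hfne ⟨u, hu⟩ ⟨v, hv⟩ huv (add_right_cancel (h1'.trans h2'.symm))
  have houter : ∀ i j v w, T.Adj z v → T.Adj w z → F i z = F j w → F i v = F j z → False := by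
    intro i j v w hv hw h1 h2
    rw [(hy v).1 hv, hFv i y₀ hy₀z, hFz] at h2
    rw [(hy w).1 hw.symm, hFv j y₀ hy₀z, hFz] at h1
    have h1' := congrArg Prod.snd (hpend i _ h1)
    have h2' := congrArg Prod.snd (hpend j _ h2.symm)
    simp only [pt] at h1' h2'
    have hone : ∀ r s t : ZMod 3, r + t = s + 2 → s + t = r + 2 → t = 2 := by decide
    exact hc _ (hone _ _ _ h1' h2')
  have hdart : ∀ i j u v u' v', T.Adj u v → T.Adj u' v' → F i u = F j u' → F i v = F j v' →
      i = j ∧ u = u' ∧ v = v' := by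
    have hpendant : ∀ i j v v', T.Adj z v → T.Adj z v' → F i z = F j z → F i v = F j v' →
        i = j ∧ v = v' := by
      intro i j v v' hv hv' h1 h2
      rw [(hy v).1 hv, (hy v').1 hv'] at h2 ⊢
      rw [hFv i y₀ hy₀z, hFv j y₀ hy₀z, Sum.inl.injEq, Prod.mk.injEq] at h2
      rw [hFz, hFz] at h1
      exact ⟨Prod.ext (add_left_cancel h2.1) (planeForm_ext hk (eq_of_pendantEnd_eq h1)
        (add_right_cancel h2.2)), rfl⟩
    intro i j u v u' v' huv huv' h1 h2
    by_cases hu : u = z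
    · subst hu
      by_cases hu' : u' = u
      · subst hu'
        obtain ⟨h3, h4⟩ := hpendant i j v v' huv huv' h1 h2
        exact ⟨h3, rfl, h4⟩
      · by_cases hv' : v' = u
        · subst hv'
          exact (houter i j v u' huv huv' h1 h2).elim
        · exact (hinner j i u' v' v huv' hu' hv' h1.symm h2.symm huv).elim
    · by_cases hv : v = z
      · subst hv
        by_cases hv' : v' = v
        · subst hv'
          obtain ⟨h3, h4⟩ := hpendant i j u u' huv.symm huv'.symm h2 h1
          exact ⟨h3, h4, rfl⟩
        · by_cases hu' : u' = v
          · subst hu'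
            exact (houter i j u v' huv.symm huv'.symm h2 h1).elim
          · exact (hinner j i v' u' u huv'.symm hv' hu' h2.symm h1.symm huv.symm).elim
      · by_cases hu' : u' = z
        · subst hu'
          exact (hinner i j u v v' huv hu hv h1 h2 huv').elim
        · by_cases hv' : v' = z
          · subst hv'
            exact (hinner i j v u u' huv.symm hv hu h2 h1 huv'.symm).elim
          · rw [hFv i u hu, hFv j u' hu', Sum.inl.injEq, Prod.mk.injEq] at h1
            rw [hFv i v hv, hFv j v' hv', Sum.inl.injEq, Prod.mk.injEq] at h2
            obtain ⟨h3, h4⟩ := hrain ⟨u, hu⟩ ⟨v, hv⟩ ⟨u', hu'⟩ ⟨v', hv'⟩ huv huv'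
              (by linear_combination h1.1 - h2.1)
            rw [← h3] at h1
            rw [← h4] at h2
            exact ⟨Prod.ext (add_left_cancel h1.1)
              (planeForm_ext (hcol ⟨u, hu⟩ ⟨v, hv⟩ huv) (add_right_cancel h1.2)
                (add_right_cancel h2.2)), congrArg Subtype.val h3, congrArg Subtype.val h4⟩
  have hbool : ∀ i u v, T.Adj u v → ∀ t, F i u = Sum.inr t → ∀ t', F i v ≠ Sum.inr t' := by
    intro i u v huv t h t' h'
    have h1 : u = z := by
      by_contra hu
      rw [hFv i u hu] at h
      cases h
    have h2 : v = z := by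
      by_contra hv
      rw [hFv i v hv] at h'
      cases h'
    exact huv.ne (h1.trans h2.symm)
  exact ⟨F, hinj, hdart, hbool⟩

/-- Let `p = 2m+1 > 10` be a prime and let `T` be a tree with `m+1` edges having a leaf `z`
such that the tree `T − z` has at least `2m/5` leaves. Then `T` decomposes `K_{6m+5} \ e`,
the complete graph on `6m+5` vertices minus one edge. -/
theorem tree_decomposes_complete_minus_edge
    (p m : ℕ) (hp : p.Prime) (hpm : p = 2 * m + 1) (hp10 : 10 < p)
    {V : Type} [Fintype V] (T : SimpleGraph V) (hT : T.IsTree)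
    (hedges : T.edgeSet.ncard = m + 1)
    (z : V) (hz : (T.neighborSet z).ncard = 1)
    (hleaves : 2 * m ≤ 5 *
      {v : {w : V // w ≠ z} |
        ((T.induce {w : V | w ≠ z}).neighborSet v).ncard = 1}.ncard)
    (a b : Fin (6 * m + 5)) (hab : a ≠ b) :
    Decomposes T ((⊤ : SimpleGraph (Fin (6 * m + 5))).deleteEdges {s(a, b)}) := by
  classical
  have : Fact p.Prime := ⟨hp⟩
  have hcardV : Fintype.card V = m + 2 := by
    rw [← hT.card_edgeFinset, ← Set.ncard_coe_finset, SimpleGraph.coe_edgeFinset, hedges]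
  have hconn : (T.induce {w : V | w ≠ z}).Connected := by
    refine hT.connected.induce_compl_singleton_of_degree_eq_one (v := z) ?_
    rw [← SimpleGraph.card_neighborFinset_eq_degree, ← Set.ncard_coe_finset,
      SimpleGraph.coe_neighborFinset, hz]
  have htree : (T.induce {w : V | w ≠ z}).IsTree := ⟨hconn, hT.isAcyclic.induce _⟩
  have hcardW : Fintype.card {w : V | w ≠ z} = m + 1 := by
    have := Set.card_ne_eq z
    rw [this, hcardV]
    rfl
  obtain ⟨f, col, c, hc, hrain, hcol, hsame⟩ :=
    htree.exists_labelling hpm (by omega) hcardW hleaves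
  obtain ⟨F, hinj, hdart, hbool⟩ := SimpleGraph.exists_copies hz hc hrain hcol hsame
  have hcardX : Fintype.card (ZMod p × ZMod 3 ⊕ Bool) = Fintype.card (Fin (6 * m + 5)) := by
    simp only [Fintype.card_sum, Fintype.card_prod, ZMod.card, Fintype.card_bool, Fintype.card_fin]
    omega
  obtain ⟨φ, hφa, hφb⟩ := (Fintype.equivOfCardEq hcardX).exists_apply_eq_apply_eq
    (x := Sum.inr false) (y := Sum.inr true) (by simp) hab
  refine Decomposes.of_injective_of_card (fun i v => φ (F i v))
    (fun i => φ.injective.comp (hinj i)) ?_ ?_ ?_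
  · intro i u v huv
    rw [SimpleGraph.deleteEdges_adj, SimpleGraph.top_adj]
    refine ⟨φ.injective.ne ((hinj i).ne huv.ne), fun h => ?_⟩
    rw [Set.mem_singleton_iff, Sym2.eq_iff, ← hφa, ← hφb] at h
    simp only [φ.injective.eq_iff] at h
    rcases h with h | h <;> exact hbool i u v huv _ h.1 _ h.2
  · intro i j u v u' v' huv huv' h1 h2
    exact hdart i j u v u' v' huv huv' (φ.injective h1) (φ.injective h2)
  · have h1 := card_edgeSet_top_deleteEdges hab
    have h2 : (6 * m + 5).choose 2 = 9 * (2 * m + 1) * (m + 1) + 1 := by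
      rw [Nat.choose_two_right]
      apply Nat.div_eq_of_eq_mul_left two_pos
      rw [show 6 * m + 5 - 1 = 6 * m + 4 by omega]
      ring
    rw [hedges]
    simp only [Fintype.card_prod, ZMod.card]
    rw [hpm]
    linarith
end
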